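/- First Growth Theorem: For every β₁ ∈ (0,1) there exists μ ∈ (0,1), depending only on n, ν, S and β₁, with the following property. Let Y = (y,s) ∈ ℝ^{n+1}, r > 0, and let u ∈ C^{2,1} on the closure of Q_r(Y) satisfy −u_t + Lu ≥ 0 at every point of Q_r(Y). If the (n+1)-dimensional Lebesgue measure of {X ∈ Q_r(Y) : u(X) > 0} is at most μ·|Q_r(Y)|, then M_{r/2}(Y) ≤ β₁ · M_r(Y), where M_ρ(Y) := max over the closure of Q_ρ(Y) of u₊ and u₊ := max(u,0). -/

import Mathlib

open MeasureTheory ENNReal Metric Set RealInnerProductSpace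

noncomputable section

/-- `n`-dimensional Euclidean space. -/
abbrev En (n : ℕ) : Type := EuclideanSpace ℝ (Fin n)

variable {n : ℕ}

/-- Time derivative `u_t`. -/
def Dt (u : En n × ℝ → ℝ) (X : En n × ℝ) : ℝ :=
  deriv (fun t => u (X.1, t)) X.2

/-- First spatial derivative `D_i u`. -/
def Dx (u : En n × ℝ → ℝ) (i : Fin n) (X : En n × ℝ) : ℝ :=
  fderiv ℝ (fun x => u (x, X.2)) X.1 (EuclideanSpace.single i 1)

/-- Second spatial derivative `D_{ij} u`. -/
def Dxx (u : En n × ℝ → ℝ) (i j : Fin n) (X : En n × ℝ) : ℝ :=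
  Dx (Dx u j) i X

/-- `u` is of class `C^{2,1}` on `Q`: `u`, `D_i u`, `D_{ij} u`, `u_t` exist and are
continuous on `Q`. -/
structure IsC21 (u : En n × ℝ → ℝ) (Q : Set (En n × ℝ)) : Prop where
  cont : ContinuousOn u Q
  diff_t : ∀ X ∈ Q, DifferentiableAt ℝ (fun t => u (X.1, t)) X.2
  diff_x : ∀ X ∈ Q, DifferentiableAt ℝ (fun x => u (x, X.2)) X.1
  diff_xx : ∀ j : Fin n, ∀ X ∈ Q, DifferentiableAt ℝ (fun x => Dx u j (x, X.2)) X.1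
  cont_t : ContinuousOn (Dt u) Q
  cont_x : ∀ i, ContinuousOn (Dx u i) Q
  cont_xx : ∀ i j, ContinuousOn (Dxx u i j) Q

/-- Uniform parabolicity with constant `ν` on `Q`:
`ν⁻¹|ξ|² ≤ Σ a_ij ξ_i ξ_j` and `Σ a_ij² ≤ ν²`. -/
def UnifParabolic (ν : ℝ) (a : En n × ℝ → Matrix (Fin n) (Fin n) ℝ)
    (Q : Set (En n × ℝ)) : Prop :=
  ∀ X ∈ Q, (∀ ξ : Fin n → ℝ, ν⁻¹ * (∑ i, ξ i ^ 2) ≤ ∑ i, ∑ j, a X i j * ξ i * ξ j) ∧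
    (∑ i, ∑ j, (a X i j) ^ 2) ≤ ν ^ 2

/-- `Lu = Σ_{ij} a_ij D_ij u + Σ_i b_i D_i u`. -/
def Lop (a : En n × ℝ → Matrix (Fin n) (Fin n) ℝ) (b : En n × ℝ → En n)
    (u : En n × ℝ → ℝ) (X : En n × ℝ) : ℝ :=
  (∑ i, ∑ j, a X i j * Dxx u i j X) + ∑ i, b X i * Dx u i X

/-- `∫ (ess sup_t |f(x,t)|)ⁿ dx`, the `n`-th power of the `L^n_x L^∞_t` norm of `f`
over the set `Q ⊆ ℝⁿ × ℝ`. -/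
def LxnLtinfPow {E : Type*} [NNNorm E] (f : En n × ℝ → E) (Q : Set (En n × ℝ)) : ℝ≥0∞ :=
  ∫⁻ x, (essSup (fun t => (‖f (x, t)‖₊ : ℝ≥0∞)) (volume.restrict {t | (x, t) ∈ Q})) ^ n

/-- The `L^n_x L^∞_t` norm of `f` over `Q`. -/
def LxnLtinf {E : Type*} [NNNorm E] (f : En n × ℝ → E) (Q : Set (En n × ℝ)) : ℝ≥0∞ :=
  (LxnLtinfPow f Q) ^ (1 / (n : ℝ))

/-- The box `B_ρ(y) × (t₁, t₂)`. -/
def box (y : En n) (ρ t₁ t₂ : ℝ) : Set (En n × ℝ) := ball y ρ ×ˢ Ioo t₁ t₂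

/-- The standard parabolic cylinder `Q_r(Y) = B_r(y) × (s - r², s)`. -/
def pcyl (Y : En n × ℝ) (r : ℝ) : Set (En n × ℝ) := box Y.1 r (Y.2 - r ^ 2) Y.2

/-- The slanted cylinder `V_r(Y) = {(x,t) : |x - (t/s)y| < r, 0 < t < s}`. -/
def slantCyl (Y : En n × ℝ) (r : ℝ) : Set (En n × ℝ) :=
  {X | ‖X.1 - (X.2 / Y.2) • Y.1‖ < r ∧ 0 < X.2 ∧ X.2 < Y.2}

/-- Supremum of the positive part `u₊` over a set `A`. -/
def supPos (u : En n × ℝ → ℝ) (A : Set (En n × ℝ)) : ℝ :=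
  sSup ((fun X => max (u X) 0) '' A)

/-- `Ω` is a Lipschitz domain with character `(rΩ, mΩ)`: at every boundary point `y`
there is a coordinate frame, encoded by the unit "vertical" direction `e`, in which
`Ω ∩ B_{rΩ}(y)` is the region above the graph of an `mΩ`-Lipschitz function `φ`
of the tangential variables. -/
def IsLipschitzDomain (Ω : Set (En n)) (rΩ mΩ : ℝ) : Prop :=
  0 < rΩ ∧ 0 ≤ mΩ ∧
  ∀ y ∈ frontier Ω, ∃ (e : En n) (φ : En n → ℝ),
    ‖e‖ = 1 ∧ LipschitzWith (Real.toNNReal mΩ) φ ∧ φ 0 = 0 ∧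
    (∀ x, x ∈ Ω ∩ ball y rΩ ↔
      dist x y < rΩ ∧ φ ((x - y) - ⟪x - y, e⟫ • e) < ⟪x - y, e⟫) ∧
    (∀ ρ : ℝ, 0 < ρ → ρ ≤ rΩ → y + ρ • e ∈ Ω)

lemma fgt_ftc {G : ℝ → ℝ} {L : NNReal} (hG : LipschitzWith L G) (hm : Monotone G) {t₀ t₁ : ℝ}
    (h : t₀ ≤ t₁) :
    ENNReal.ofReal (G t₁ - G t₀) ≤ ∫⁻ t in Ioo t₀ t₁, ENNReal.ofReal (deriv G t) := by
  have hac : AbsolutelyContinuousOnInterval G t₀ t₁ :=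
    (hG.lipschitzOnWith (s := uIcc t₀ t₁)).absolutelyContinuousOnInterval
  rw [← hac.integral_deriv_eq_sub, intervalIntegral.integral_of_le h,
    integral_Ioc_eq_integral_Ioo, ofReal_integral_eq_lintegral_ofReal]
  · have := hac.intervalIntegrable_deriv
    rw [intervalIntegrable_iff_integrableOn_Ioo_of_le h] at this
    exact this
  · exact Filter.Eventually.of_forall fun t => hm.deriv_nonneg

/-- Slice lemma: area-type inequality with a weight. -/
lemma fgt_slice {E : Type*} [NormedAddCommGroup E] [NormedSpace ℝ E] [FiniteDimensional ℝ E]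
    [MeasurableSpace E] [BorelSpace E] (μ : Measure E) [μ.IsAddHaarMeasure]
    {s : Set E} (hs : MeasurableSet s) {f : E → E} {f' : E → E →L[ℝ] E}
    (hf : ∀ x ∈ s, HasFDerivWithinAt f (f' x) s x)
    (hdet : AEMeasurable (fun x => ENNReal.ofReal |(f' x).det|) (μ.restrict s))
    {q F : E → ℝ} (hq : Measurable q) (hq0 : ∀ x, 0 ≤ q x)
    (hF : Measurable F) (hF0 : ∀ p, 0 ≤ F p)
    (h : ∀ p, 0 < F p → ∃ x ∈ s, f x = p ∧ F p ≤ q x) :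
    ∫⁻ p, ENNReal.ofReal (F p) ∂μ ≤
      ∫⁻ x in s, ENNReal.ofReal |(f' x).det| * ENNReal.ofReal (q x) ∂μ := by
  have e1 := lintegral_withDensity_eq_lintegral_mul₀ hdet
    (g := fun x => ENNReal.ofReal (q x)) (hq.ennreal_ofReal.aemeasurable)
  simp only [Pi.mul_apply] at e1
  rw [← e1, lintegral_eq_lintegral_meas_lt _ (Filter.Eventually.of_forall hF0) hF.aemeasurable,
    lintegral_eq_lintegral_meas_lt _ (Filter.Eventually.of_forall hq0) hq.aemeasurable]
  refine setLIntegral_mono' measurableSet_Ioi fun c hc => ?_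
  have hmq : MeasurableSet {a | c < q a} := measurableSet_lt measurable_const hq
  rw [withDensity_apply _ hmq, Measure.restrict_restrict hmq]
  have hsub : {a | c < F a} ⊆ f '' ({a | c < q a} ∩ s) := by
    intro p hp
    obtain ⟨x, hx, hxp, hle⟩ := h p (lt_trans hc hp)
    exact ⟨x, ⟨lt_of_lt_of_le hp hle, hx⟩, hxp⟩
  refine (measure_mono hsub).trans ?_
  exact addHaar_image_le_lintegral_abs_det_fderiv μ (hmq.inter hs)
    fun x hx => (hf x hx.2).mono inter_subset_right

/-- Second order necessary condition at an interior maximum. -/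
lemma fgt_second {E : Type*} [NormedAddCommGroup E] [InnerProductSpace ℝ E]
    {f : E → ℝ} {g : E → E} {H : E →L[ℝ] E} {x : E} {c : E}
    (hf : ∀ᶠ z in nhds x, HasFDerivAt f (innerSL ℝ (g z)) z)
    (hg : HasFDerivAt g H x) (hmax : IsLocalMax (fun z => f z - ⟪c, z⟫) x) :
    g x = c ∧ ∀ ξ : E, ⟪H ξ, ξ⟫ ≤ 0 := by
  have h1 : ∀ᶠ z in nhds x, HasFDerivAt (fun z => f z - ⟪c, z⟫) (innerSL ℝ (g z - c)) z := by
    filter_upwards [hf] with z hz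
    have := hz.sub ((innerSL ℝ c).hasFDerivAt (x := z))
    rw [map_sub]; exact this
  have h2 : innerSL ℝ (g x - c) = 0 := hmax.hasFDerivAt_eq_zero h1.self_of_nhds
  have h3 : g x = c := by
    have : (innerSL ℝ (g x - c)) (g x - c) = 0 := by rw [h2]; rfl
    simp only [innerSL_apply_apply, inner_self_eq_zero] at this
    exact sub_eq_zero.1 this
  refine ⟨h3, fun ξ => ?_⟩
  by_contra hcon
  push Not at hcon
  set φ : ℝ → ℝ := fun τ => f (x + τ • ξ) - ⟪c, x + τ • ξ⟫ with hφ
  have hline : Continuous fun τ : ℝ => x + τ • ξ := by fun_prop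
  have hl0 : Filter.Tendsto (fun τ : ℝ => x + τ • ξ) (nhds 0) (nhds x) := by
    have := hline.tendsto 0
    simpa using this
  have hlined : ∀ τ : ℝ, HasDerivAt (fun τ : ℝ => x + τ • ξ) ξ τ := fun τ => by
    simpa using ((hasDerivAt_id τ).smul_const ξ).const_add x
  have hφd : ∀ᶠ τ in nhds (0:ℝ), HasDerivAt φ ⟪g (x + τ • ξ) - c, ξ⟫ τ := by
    filter_upwards [hl0.eventually h1] with τ hτ
    exact hτ.comp_hasDerivAt τ (hlined τ)
  have hφ1 : deriv φ =ᶠ[nhds 0] fun τ => ⟪g (x + τ • ξ) - c, ξ⟫ :=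
    hφd.mono fun τ h => h.deriv
  have hφ2 : HasDerivAt (fun τ : ℝ => ⟪g (x + τ • ξ) - c, ξ⟫) ⟪H ξ, ξ⟫ 0 := by
    have hg' : HasFDerivAt g H (x + (0:ℝ) • ξ) := by simpa using hg
    have a1 : HasDerivAt (fun τ : ℝ => g (x + τ • ξ) - c) (H ξ) 0 :=
      (hg'.comp_hasDerivAt (0:ℝ) (hlined 0)).sub_const c
    simpa using a1.inner ℝ (hasDerivAt_const (0:ℝ) ξ)
  have hdd : deriv (deriv φ) 0 = ⟪H ξ, ξ⟫ := by
    rw [hφ1.deriv_eq]; exact hφ2.deriv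
  have hd0 : deriv φ 0 = 0 := by
    rw [hφ1.self_of_nhds]; simp [h3]
  have hmin : IsLocalMin φ 0 := isLocalMin_of_deriv_deriv_pos (by rw [hdd]; exact hcon) hd0
    (hφd.self_of_nhds).continuousAt
  have hmax' : ∀ᶠ τ in nhds (0:ℝ), φ τ ≤ φ 0 := by
    have := hl0.eventually hmax
    simpa [hφ] using this
  have hconst : φ =ᶠ[nhds 0] fun _ => φ 0 := by
    filter_upwards [hmin, hmax'] with τ a b using le_antisymm b a
  have : deriv φ =ᶠ[nhds 0] fun _ => 0 := by
    have := hconst.deriv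
    simpa using this
  have := this.deriv_eq
  rw [hdd] at this
  simp at this
  linarith

/-- Classical derivative data for a function on a closed cylinder. -/
structure FgtData (v vt : En n × ℝ → ℝ) (g : En n × ℝ → En n) (H : En n × ℝ → En n →L[ℝ] En n)
    (y : En n) (ρ t₀ t₁ : ℝ) : Prop where
  cv : ContinuousOn v (closedBall y ρ ×ˢ Icc t₀ t₁)
  cvt : ContinuousOn vt (closedBall y ρ ×ˢ Icc t₀ t₁)
  cg : ContinuousOn g (closedBall y ρ ×ˢ Icc t₀ t₁)
  cH : ContinuousOn H (closedBall y ρ ×ˢ Icc t₀ t₁)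
  dt : ∀ x ∈ closedBall y ρ, ∀ t ∈ Icc t₀ t₁, HasDerivAt (fun t => v (x, t)) (vt (x, t)) t
  dx : ∀ x ∈ closedBall y ρ, ∀ t ∈ Icc t₀ t₁,
    HasFDerivAt (fun x => v (x, t)) (innerSL ℝ (g (x, t))) x
  dxx : ∀ x ∈ closedBall y ρ, ∀ t ∈ Icc t₀ t₁,
    HasFDerivAt (fun x => g (x, t)) (H (x, t)) x

lemma fgt_G {v vt : En n × ℝ → ℝ} {g : En n × ℝ → En n} {H : En n × ℝ → En n →L[ℝ] En n}
    {y : En n} {ρ t₀ t₁ : ℝ} (hρ : 0 < ρ) (ht : t₀ < t₁) (D : FgtData v vt g H y ρ t₀ t₁) :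
    ∃ G : En n → ℝ → ℝ, Continuous (Function.uncurry G) ∧ (∃ L, ∀ p, LipschitzWith L (G p)) ∧
      (∀ p, Monotone (G p)) ∧ (∀ p t, ‖p‖ * ρ ≤ G p t) ∧
      (∀ p, ∀ x ∈ closedBall y ρ, ∀ t ∈ Icc t₀ t₁, v (x, t) - ⟪p, x - y⟫ ≤ G p t) ∧
      (∀ p, ∀ t ∈ Icc t₀ t₁, G p t = ‖p‖ * ρ ∨
        ∃ x ∈ closedBall y ρ, ∃ s ∈ Icc t₀ t, G p t = v (x, s) - ⟪p, x - y⟫) := by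
  classical
  have : CompactSpace ↥(closedBall y ρ) := isCompact_iff_compactSpace.1 (isCompact_closedBall y ρ)
  have : Nonempty (↥(closedBall y ρ) × ↥(Icc t₀ t₁)) := ⟨⟨⟨y, mem_closedBall_self hρ.le⟩, ⟨t₀, left_mem_Icc.2 ht.le⟩⟩⟩
  let cl : ℝ → ℝ := fun t => max t₀ (min t t₁)
  have hcl : ∀ t, cl t ∈ Icc t₀ t₁ := fun t =>
    ⟨le_max_left _ _, max_le ht.le (min_le_right _ _)⟩
  have hcl' : ∀ t ∈ Icc t₀ t₁, cl t = t := fun t h => by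
    simp [cl, min_eq_left h.2, max_eq_right h.1]
  have hclc : Continuous cl := by fun_prop
  have hclm : Monotone cl := fun a b h => max_le_max le_rfl (min_le_min h le_rfl)
  have hcll : ∀ a b, |cl a - cl b| ≤ |a - b| := fun a b => by
    refine (abs_max_sub_max_le_max _ _ _ _).trans ?_
    refine max_le (by simp) ?_
    refine (abs_min_sub_min_le_max _ _ _ _).trans ?_
    simp
  have hmm : ∀ (z : ↥(closedBall y ρ) × ↥(Icc t₀ t₁)) t, min (z.2 : ℝ) (cl t) ∈ Icc t₀ t₁ := fun z t =>
    ⟨le_min z.2.2.1 (hcl t).1, (min_le_left _ _).trans z.2.2.2⟩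
  let F : En n × ℝ → (↥(closedBall y ρ) × ↥(Icc t₀ t₁)) → ℝ := fun q z => v (z.1, min (z.2 : ℝ) (cl q.2)) - ⟪q.1, (z.1 : En n) - y⟫
  have hF : Continuous (fun w : (En n × ℝ) × (↥(closedBall y ρ) × ↥(Icc t₀ t₁)) => F w.1 w.2) := by
    refine Continuous.sub ?_ (by fun_prop)
    refine D.cv.comp_continuous (by fun_prop) fun w => ?_
    exact ⟨w.2.1.2, hmm w.2 w.1.2⟩
  let S : En n × ℝ → ℝ := fun q => sSup (F q '' univ)
  have hS : Continuous S := isCompact_univ.continuous_sSup (f := F) hF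
  have hFq : ∀ q, Continuous (F q) := fun q => hF.comp (by fun_prop : Continuous fun z => (q, z))
  have hle : ∀ q z, F q z ≤ S q := fun q z => by
    refine le_csSup ?_ ⟨z, mem_univ _, rfl⟩
    exact (isCompact_univ.image (hFq q)).bddAbove
  have hatt : ∀ q, ∃ z, S q = F q z := fun q => by
    obtain ⟨z, -, hz⟩ := isCompact_univ.exists_sSup_image_eq (univ_nonempty) (hFq q).continuousOn
    exact ⟨z, hz⟩
  obtain ⟨C, hC⟩ := ((isCompact_closedBall y ρ).prod isCompact_Icc).exists_bound_of_continuousOn D.cvt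
  have hC0 : 0 ≤ C := (norm_nonneg _).trans
    (hC (y, t₀) ⟨mem_closedBall_self hρ.le, left_mem_Icc.2 ht.le⟩)
  have hlip : ∀ x ∈ closedBall y ρ, ∀ s ∈ Icc t₀ t₁, ∀ s' ∈ Icc t₀ t₁,
      |v (x, s) - v (x, s')| ≤ C * |s - s'| := by
    intro x hx s hs s' hs'
    have := (convex_Icc t₀ t₁).norm_image_sub_le_of_norm_hasDerivWithin_le
      (f := fun t => v (x, t)) (f' := fun t => vt (x, t)) (C := C)
      (fun t h => (D.dt x hx t h).hasDerivWithinAt) (fun t h => hC (x, t) ⟨hx, h⟩) hs' hs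
    simpa [Real.norm_eq_abs] using this
  refine ⟨fun p t => max (‖p‖ * ρ) (S (p, t)), ?_, ⟨C.toNNReal, fun p => ?_⟩, ?_, ?_, ?_, ?_⟩
  · show Continuous (fun q : En n × ℝ => max (‖q.1‖ * ρ) (S (q.1, q.2)))
    fun_prop
  · refine LipschitzWith.const_max ?_ _
    refine LipschitzWith.of_le_add_mul _ fun t t' => ?_
    obtain ⟨z, hz⟩ := hatt (p, t)
    rw [hz]
    have h1 := hle (p, t') z
    have h2 := hlip z.1 z.1.2 _ (hmm z t) _ (hmm z t')
    have h3 : |min (z.2 : ℝ) (cl t) - min (z.2 : ℝ) (cl t')| ≤ |t - t'| := by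
      refine (abs_min_sub_min_le_max _ _ _ _).trans ?_
      refine max_le (by simp) (hcll t t')
    have h4 := (abs_le.1 h2).2
    have h5 := mul_le_mul_of_nonneg_left h3 hC0
    rw [Real.coe_toNNReal _ hC0, Real.dist_eq]
    simp only [F] at h1 ⊢
    linarith
  · intro p t t' htt
    refine max_le_max le_rfl ?_
    obtain ⟨z, hz⟩ := hatt (p, t)
    rw [hz]
    let z' : (↥(closedBall y ρ) × ↥(Icc t₀ t₁)) := ⟨z.1, ⟨min (z.2 : ℝ) (cl t), hmm z t⟩⟩
    have := hle (p, t') z'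
    have e : F (p, t') z' = F (p, t) z := by
      simp only [F, z']
      rw [min_eq_left ((min_le_right _ _).trans (hclm htt))]
    rw [e] at this
    exact this
  · intro p t
    exact le_max_left _ _
  · intro p x hx t htI
    refine le_trans ?_ (le_max_right _ _)
    have := hle (p, t) ⟨⟨x, hx⟩, ⟨t, htI⟩⟩
    simpa [F, hcl' t htI] using this
  · intro p t htI
    rcases max_choice (‖p‖ * ρ) (S (p, t)) with h | h
    · exact Or.inl h
    · right
      obtain ⟨z, hz⟩ := hatt (p, t)
      refine ⟨z.1, z.1.2, min (z.2 : ℝ) (cl t), ⟨(hmm z t).1, ?_⟩, ?_⟩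
      · rw [hcl' t htI]; exact min_le_right _ _
      · exact h.trans hz

/-- The contact property at points where `G p` increases. -/
lemma fgt_contact {v vt : En n × ℝ → ℝ} {g : En n × ℝ → En n} {H : En n × ℝ → En n →L[ℝ] En n}
    {y : En n} {ρ t₀ t₁ : ℝ} (D : FgtData v vt g H y ρ t₀ t₁)
    (hlat : ∀ x ∈ sphere y ρ, ∀ t ∈ Icc t₀ t₁, v (x, t) ≤ 0)
    {G : ℝ → ℝ} {p : En n} (hm : Monotone G) (h1 : ∀ t, ‖p‖ * ρ ≤ G t)
    (h2 : ∀ x ∈ closedBall y ρ, ∀ t ∈ Icc t₀ t₁, v (x, t) - ⟪p, x - y⟫ ≤ G t)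
    (h3 : ∀ t ∈ Icc t₀ t₁, G t = ‖p‖ * ρ ∨
        ∃ x ∈ closedBall y ρ, ∃ s ∈ Icc t₀ t, G t = v (x, s) - ⟪p, x - y⟫)
    {t : ℝ} (ht : t ∈ Ioo t₀ t₁) (hd : 0 < deriv G t) :
    ∃ x ∈ ball y ρ, 0 < v (x, t) ∧ vt (x, t) = deriv G t ∧ g (x, t) = p ∧
      (∀ ξ, ⟪H (x, t) ξ, ξ⟫ ≤ 0) ∧
      ∀ z ∈ closedBall y ρ, ∀ s ∈ Icc t₀ t, v (z, s) ≤ v (x, t) + ⟪p, z - x⟫ := by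
  have htI : t ∈ Icc t₀ t₁ := Ioo_subset_Icc_self ht
  have hdiff : DifferentiableAt ℝ G t := differentiableAt_of_deriv_ne_zero hd.ne'
  have hIn : ∀ᶠ s in nhds t, s ∈ Icc t₀ t₁ := Icc_mem_nhds ht.1 ht.2
  rcases h3 t htI with h | ⟨x, hx, s, hs, h⟩
  · exfalso
    have : IsLocalMin G t := Filter.Eventually.of_forall fun s => by rw [h]; exact h1 s
    rw [this.deriv_eq_zero] at hd
    exact lt_irrefl _ hd
  have hst : s = t := by
    by_contra hne
    have hlt : s < t := lt_of_le_of_ne hs.2 hne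
    have : IsLocalMin G t := by
      filter_upwards [Ioi_mem_nhds hlt] with t' ht'
      rw [h]
      exact (h2 x hx s ⟨hs.1, hs.2.trans htI.2⟩).trans (hm (le_of_lt ht'))
    rw [this.deriv_eq_zero] at hd
    exact lt_irrefl _ hd
  subst hst
  have hgt : ‖p‖ * ρ < G s := by
    refine lt_of_le_of_ne (h1 s) fun heq => ?_
    have : IsLocalMin G s := Filter.Eventually.of_forall fun s' => by rw [← heq]; exact h1 s'
    rw [this.deriv_eq_zero] at hd
    exact lt_irrefl _ hd
  have hpos : 0 < v (x, s) := by
    have a1 : -(‖p‖ * ‖x - y‖) ≤ ⟪p, x - y⟫ := (abs_le.1 (abs_real_inner_le_norm p (x - y))).1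
    have a2 : ‖x - y‖ ≤ ρ := by simpa [dist_eq_norm] using hx
    have a3 := mul_le_mul_of_nonneg_left a2 (norm_nonneg p)
    rw [h] at hgt
    linarith
  have hxb : x ∈ ball y ρ := by
    rw [mem_ball]
    refine lt_of_le_of_ne hx fun heq => ?_
    exact absurd (hlat x heq s htI) (not_le.2 hpos)
  have hcon : ∀ z ∈ closedBall y ρ, ∀ s' ∈ Icc t₀ s, v (z, s') ≤ v (x, s) + ⟪p, z - x⟫ := by
    intro z hz s' hs'
    have b1 := h2 z hz s' ⟨hs'.1, hs'.2.trans htI.2⟩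
    have b2 := hm hs'.2
    rw [h] at b2
    have b3 : ⟪p, z - x⟫ = ⟪p, z - y⟫ - ⟪p, x - y⟫ := by
      rw [← inner_sub_right]; congr 1; abel
    linarith
  have hball : ∀ᶠ z in nhds x, z ∈ ball y ρ := isOpen_ball.mem_nhds hxb
  have hsec := fgt_second (f := fun z => v (z, s)) (g := fun z => g (z, s)) (c := p) (x := x)
    (H := H (x, s)) (by
      filter_upwards [hball] with z hz using D.dx z (ball_subset_closedBall hz) s htI)
    (D.dxx x hx s htI) (by
      filter_upwards [hball] with z hz
      have := hcon z (ball_subset_closedBall hz) s ⟨htI.1, le_rfl⟩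
      rw [inner_sub_right] at this
      linarith)
  refine ⟨x, hxb, hpos, ?_, hsec.1, hsec.2, hcon⟩
  have hmin : IsLocalMin (fun t' => G t' - v (x, t')) s := by
    filter_upwards [hIn] with t' ht'
    have := h2 x hx t' ht'
    rw [h]
    linarith
  have := hmin.hasDerivAt_eq_zero (hdiff.hasDerivAt.sub (D.dt x hx s htI))
  linarith

/-- The contact set. -/
def fgtE (v vt : En n × ℝ → ℝ) (g : En n × ℝ → En n) (H : En n × ℝ → En n →L[ℝ] En n)
    (y : En n) (ρ t₀ t₁ : ℝ) : Set (En n × ℝ) :=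
  {X | X ∈ box y ρ t₀ t₁ ∧ 0 < v X ∧ 0 < vt X ∧ (∀ ξ, ⟪H X ξ, ξ⟫ ≤ 0) ∧
    ∀ z ∈ closedBall y ρ, ∀ s ∈ Icc t₀ X.2, v (z, s) ≤ v X + ⟪g X, z - X.1⟫}

lemma fgt_box_meas (y : En n) (ρ t₀ t₁ : ℝ) : MeasurableSet (box y ρ t₀ t₁) :=
  measurableSet_ball.prod measurableSet_Ioo

lemma fgt_box_sub {y : En n} {ρ t₀ t₁ : ℝ} :
    box y ρ t₀ t₁ ⊆ closedBall y ρ ×ˢ Icc t₀ t₁ :=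
  prod_mono ball_subset_closedBall Ioo_subset_Icc_self

lemma fgt_pos_meas {f : En n × ℝ → ℝ} {K : Set (En n × ℝ)} (hK : IsClosed K)
    (hf : ContinuousOn f K) : MeasurableSet {X | X ∈ K ∧ 0 < f X} := by
  have h := hf.preimage_isClosed_of_isClosed hK (isClosed_Iic (a := (0:ℝ)))
  have : {X | X ∈ K ∧ 0 < f X} = K \ (K ∩ f ⁻¹' Iic 0) := by
    ext X; simp only [mem_ofPred_eq, mem_sdiff, mem_inter_iff, mem_preimage, mem_Iic, not_and, not_le]
    tauto
  rw [this]
  exact hK.measurableSet.diff h.measurableSet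

lemma fgt_E_meas {v vt : En n × ℝ → ℝ} {g : En n × ℝ → En n} {H : En n × ℝ → En n →L[ℝ] En n}
    {y : En n} {ρ t₀ t₁ : ℝ} (D : FgtData v vt g H y ρ t₀ t₁) :
    MeasurableSet (fgtE v vt g H y ρ t₀ t₁) := by
  set K : Set (En n × ℝ) := closedBall y ρ ×ˢ Icc t₀ t₁ with hKdef
  have hK : IsClosed K := isClosed_closedBall.prod isClosed_Icc
  have m1 := fgt_pos_meas hK D.cv
  have m2 := fgt_pos_meas hK D.cvt
  have m3 : IsClosed (⋂ ξ : En n, K ∩ (fun X => ⟪H X ξ, ξ⟫) ⁻¹' Iic 0) := by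
    refine isClosed_iInter fun ξ => ?_
    refine ContinuousOn.preimage_isClosed_of_isClosed ?_ hK isClosed_Iic
    have := D.cH
    fun_prop
  have m4 : IsClosed (⋂ z : En n, ⋂ _ : z ∈ closedBall y ρ, ⋂ θ : ℝ, ⋂ _ : θ ∈ Icc (0:ℝ) 1,
      K ∩ (fun X : En n × ℝ => v (z, t₀ + θ * (X.2 - t₀)) - (v X + ⟪g X, z - X.1⟫)) ⁻¹' Iic 0) := by
    refine isClosed_iInter fun z => isClosed_iInter fun hz => isClosed_iInter fun θ =>
      isClosed_iInter fun hθ => ?_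
    refine ContinuousOn.preimage_isClosed_of_isClosed ?_ hK isClosed_Iic
    have h1 := D.cv
    have h2 := D.cg
    refine ContinuousOn.sub ?_ (by fun_prop)
    refine D.cv.comp (f := fun X : En n × ℝ => (z, t₀ + θ * (X.2 - t₀)))
      (by fun_prop) fun X hX => ?_
    refine ⟨hz, ?_, ?_⟩
    · have := mul_nonneg hθ.1 (sub_nonneg.2 hX.2.1)
      simp only; linarith
    · have := mul_le_mul_of_nonneg_right hθ.2 (sub_nonneg.2 hX.2.1)
      have := hX.2.2
      simp only; linarith
  have : fgtE v vt g H y ρ t₀ t₁ = box y ρ t₀ t₁ ∩ {X | X ∈ K ∧ 0 < v X} ∩ {X | X ∈ K ∧ 0 < vt X} ∩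
      (⋂ ξ : En n, K ∩ (fun X => ⟪H X ξ, ξ⟫) ⁻¹' Iic 0) ∩
      (⋂ z : En n, ⋂ _ : z ∈ closedBall y ρ, ⋂ θ : ℝ, ⋂ _ : θ ∈ Icc (0:ℝ) 1,
      K ∩ (fun X : En n × ℝ => v (z, t₀ + θ * (X.2 - t₀)) - (v X + ⟪g X, z - X.1⟫)) ⁻¹' Iic 0) := by
    ext X
    simp only [fgtE, mem_ofPred_eq, mem_inter_iff, mem_iInter, mem_preimage, mem_Iic, sub_nonpos]
    constructor
    · rintro ⟨hX, h1, h2, h3, h4⟩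
      have hXK : X ∈ K := fgt_box_sub hX
      refine ⟨⟨⟨⟨hX, hXK, h1⟩, hXK, h2⟩, fun ξ => ⟨hXK, h3 ξ⟩⟩, fun z hz θ hθ => ⟨hXK, h4 z hz _ ?_⟩⟩
      have a1 := mul_nonneg hθ.1 (sub_nonneg.2 hXK.2.1)
      have a2 := mul_le_mul_of_nonneg_right hθ.2 (sub_nonneg.2 hXK.2.1)
      constructor <;> linarith
    · rintro ⟨⟨⟨⟨hX, hXK, h1⟩, -, h2⟩, h3⟩, h4⟩
      refine ⟨hX, h1, h2, fun ξ => (h3 ξ).2, fun z hz s hs => ?_⟩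
      have hpos : 0 < X.2 - t₀ := sub_pos.2 hX.2.1
      have := (h4 z hz ((s - t₀) / (X.2 - t₀)) ⟨div_nonneg (sub_nonneg.2 hs.1) hpos.le, by
        rw [div_le_one hpos]; linarith [hs.2]⟩).2
      rwa [div_mul_cancel₀ _ hpos.ne', add_sub_cancel] at this
  rw [this]
  exact ((((fgt_box_meas _ _ _ _).inter m1).inter m2).inter m3.measurableSet).inter m4.measurableSet

/-- Bound for the time integral over contact times. -/
lemma fgt_time {v vt : En n × ℝ → ℝ} {g : En n × ℝ → En n} {H : En n × ℝ → En n →L[ℝ] En n}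
    {y : En n} {ρ t₀ t₁ : ℝ} (D : FgtData v vt g H y ρ t₀ t₁) {V : ℝ}
    (hV : ∀ X ∈ box y ρ t₀ t₁, v X ≤ V) (x : En n) :
    ∫⁻ t in {t | (x, t) ∈ fgtE v vt g H y ρ t₀ t₁}, ENNReal.ofReal (vt (x, t)) ≤ ENNReal.ofReal V := by
  have hm : MeasurableSet {t | (x, t) ∈ fgtE v vt g H y ρ t₀ t₁} :=
    (fgt_E_meas D).preimage measurable_prodMk_left
  rw [lintegral_deriv_eq_volume_image_of_monotoneOn hm (f := fun t => v (x, t))]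
  · calc _ ≤ volume (Icc 0 V) := measure_mono ?_
      _ = _ := by simp
    rintro _ ⟨t, ht, rfl⟩
    exact ⟨ht.2.1.le, hV _ ht.1⟩
  · intro t ht
    exact (D.dt x (fgt_box_sub ht.1).1 t (fgt_box_sub ht.1).2).hasDerivWithinAt
  · intro t ht t' ht' htt
    have := ht'.2.2.2.2 x (fgt_box_sub ht.1).1 t ⟨ht.1.2.1.le, htt⟩
    simpa using this

theorem fgt_core {v vt : En n × ℝ → ℝ} {g : En n × ℝ → En n} {H : En n × ℝ → En n →L[ℝ] En n}
    {y : En n} {ρ t₀ t₁ : ℝ} (hρ : 0 < ρ) (ht : t₀ < t₁) (D : FgtData v vt g H y ρ t₀ t₁)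
    (hlat : ∀ x ∈ sphere y ρ, ∀ t ∈ Icc t₀ t₁, v (x, t) ≤ 0)
    (hbot : ∀ x ∈ closedBall y ρ, v (x, t₀) ≤ 0)
    {x₀ : En n} (hx₀ : x₀ ∈ closedBall y ρ) {m V : ℝ} (hm : m ≤ v (x₀, t₁))
    (hV : ∀ X ∈ box y ρ t₀ t₁, v X ≤ V)
    {w : En n → ℝ} (hw : Continuous w) (hw0 : ∀ p, 0 ≤ w p)
    {C₁ C₂ : ℝ≥0∞} (hC₂ : C₂ ≠ ∞) {B : En n × ℝ → ℝ≥0∞} {β : En n → ℝ≥0∞}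
    (hβ : ∀ x ∈ ball y ρ, ∀ᵐ t ∂(volume.restrict (Ioo t₀ t₁)), B (x, t) ≤ β x)
    (hmain : ∀ X ∈ box y ρ t₀ t₁, 0 < v X → 0 < vt X → (∀ ξ, ⟪H X ξ, ξ⟫ ≤ 0) →
      ENNReal.ofReal (w (g X) * vt X * |(H X).det|) ≤ C₁ ∨
      ENNReal.ofReal (w (g X) * |(H X).det|) ≤ C₂ * B X ^ n) :
    ENNReal.ofReal (m / 2) * ∫⁻ p in closedBall 0 (m / (4 * ρ)), ENNReal.ofReal (w p) ≤
      C₁ * volume {X | X ∈ box y ρ t₀ t₁ ∧ 0 < v X} +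
        C₂ * ENNReal.ofReal V * ∫⁻ x in ball y ρ, β x ^ n := by
  classical
  obtain ⟨G, hGc, ⟨L, hGL⟩, hGm, hG1, hG2, hG3⟩ := fgt_G hρ ht D
  set E := fgtE v vt g H y ρ t₀ t₁ with hE
  have hEm : MeasurableSet E := fgt_E_meas D
  have hEsub : E ⊆ closedBall y ρ ×ˢ Icc t₀ t₁ := fun X hX => fgt_box_sub hX.1
  have cvt := D.cvt.mono hEsub
  have cg := D.cg.mono hEsub
  have cH := D.cH.mono hEsub
  have cdet : ContinuousOn (fun X => |(H X).det|) E := by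
    refine ContinuousOn.abs ?_
    exact ContinuousLinearMap.continuous_det.comp_continuousOn cH
  have cwg : ContinuousOn (fun X => w (g X)) E := hw.comp_continuousOn cg
  -- measurable functions
  set q : En n × ℝ → ℝ := E.indicator (fun X => w (g X) * vt X) with hq
  have hqm : Measurable q := by
    rw [hq, ← piecewise_eq_indicator]
    exact ContinuousOn.measurable_piecewise (cwg.mul cvt) continuousOn_const hEm
  set Ψ : En n × ℝ → ℝ := E.indicator (fun X => w (g X) * vt X * |(H X).det|) with hΨ
  have hΨm : Measurable Ψ := by
    rw [hΨ, ← piecewise_eq_indicator]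
    exact ContinuousOn.measurable_piecewise ((cwg.mul cvt).mul cdet) continuousOn_const hEm
  have hq0 : ∀ X, 0 ≤ q X := fun X => indicator_nonneg
    (fun X hX => mul_nonneg (hw0 _) hX.2.2.1.le) X
  have hder : Measurable (fun z : En n × ℝ => deriv (G z.1) z.2) := measurable_deriv_with_param hGc
  have hder0 : ∀ p t, 0 ≤ deriv (G p) t := fun p t => (hGm p).deriv_nonneg
  -- Step A
  have hA : ∀ p ∈ closedBall (0 : En n) (m / (4 * ρ)), ENNReal.ofReal (m / 2) ≤
      ∫⁻ t in Ioo t₀ t₁, ENNReal.ofReal (deriv (G p) t) := by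
    intro p hp
    refine le_trans (ENNReal.ofReal_le_ofReal ?_) (fgt_ftc (hGL p) (hGm p) ht.le)
    have hp' : ‖p‖ * ρ ≤ m / 4 := by
      rw [mem_closedBall_zero_iff, le_div_iff₀ (by positivity)] at hp
      linarith
    have hin : ∀ x ∈ closedBall y ρ, |⟪p, x - y⟫| ≤ ‖p‖ * ρ := fun x hx => by
      refine (abs_real_inner_le_norm p (x - y)).trans ?_
      refine mul_le_mul_of_nonneg_left ?_ (norm_nonneg p)
      simpa [dist_eq_norm] using hx
    have a1 : G p t₀ ≤ ‖p‖ * ρ := by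
      rcases hG3 p t₀ (left_mem_Icc.2 ht.le) with h | ⟨x, hx, s, hs, h⟩
      · exact h.le
      · have : s = t₀ := le_antisymm hs.2 hs.1
        subst this
        rw [h]
        linarith [hbot x hx, (abs_le.1 (hin x hx)).1]
    have a2 := hG2 p x₀ hx₀ t₁ (right_mem_Icc.2 ht.le)
    linarith [(abs_le.1 (hin x₀ hx₀)).2]
  -- Step C
  have hC : ∀ t ∈ Ioo t₀ t₁, ∫⁻ p, ENNReal.ofReal (w p * deriv (G p) t) ≤
      ∫⁻ x, ENNReal.ofReal (Ψ (x, t)) := by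
    intro t htt
    have hsm : MeasurableSet {x | (x, t) ∈ E} := hEm.preimage measurable_prodMk_right
    have hsl := fgt_slice (volume : Measure (En n)) (s := {x | (x, t) ∈ E}) hsm
      (f := fun x => g (x, t)) (f' := fun x => H (x, t))
      (fun x hx => (D.dxx x (hEsub hx).1 t (hEsub hx).2).hasFDerivWithinAt)
      (by
        refine AEMeasurable.ennreal_ofReal ?_
        refine ContinuousOn.aemeasurable ?_ hsm
        exact cdet.comp (f := fun x : En n => (x, t)) (by fun_prop) fun x hx => hx)
      (q := fun x => q (x, t)) (F := fun p => w p * deriv (G p) t)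
      (hqm.comp measurable_prodMk_right) (fun x => hq0 _)
      (hw.measurable.mul (hder.comp measurable_prodMk_right))
      (fun p => mul_nonneg (hw0 p) (hder0 p t))
      (by
        intro p hp
        have hd : 0 < deriv (G p) t := by
          rcases (hder0 p t).lt_or_eq with h | h
          · exact h
          · rw [← h, mul_zero] at hp; exact absurd hp (lt_irrefl _)
        obtain ⟨x, hx, hv, hvt, hg, hHs, hcon⟩ := fgt_contact D hlat (hGm p) (hG1 p) (hG2 p)
          (hG3 p) htt hd
        have hxE : (x, t) ∈ E := ⟨⟨hx, htt⟩, hv, by rw [hvt]; exact hd, hHs, by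
          simpa only [hg] using hcon⟩
        refine ⟨x, hxE, hg, ?_⟩
        rw [hq, indicator_of_mem hxE, hvt, hg])
    refine hsl.trans ?_
    refine le_trans ?_ (setLIntegral_le_lintegral {x | (x, t) ∈ E} _)
    refine (setLIntegral_congr_fun hsm fun x hx => ?_).le
    have hx' : (x, t) ∈ E := hx
    simp only [hq, hΨ, indicator_of_mem hx']
    rw [← ENNReal.ofReal_mul (abs_nonneg _), mul_comm]
  -- Step E
  set A : Set (En n × ℝ) := {X | X ∈ box y ρ t₀ t₁ ∧ 0 < v X} with hAdef
  have hAm : MeasurableSet A := by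
    have := (fgt_box_meas y ρ t₀ t₁).inter
      (fgt_pos_meas (isClosed_closedBall.prod isClosed_Icc) D.cv)
    convert this using 1
    ext X
    simp only [hAdef, mem_ofPred_eq, mem_inter_iff]
    exact ⟨fun h => ⟨h.1, fgt_box_sub h.1, h.2⟩, fun h => ⟨h.1, h.2.2⟩⟩
  have hΨe : Measurable fun X => ENNReal.ofReal (Ψ X) := hΨm.ennreal_ofReal
  set Ψ₂ : En n × ℝ → ℝ≥0∞ :=
    {X | C₁ < ENNReal.ofReal (Ψ X)}.indicator (fun X => ENNReal.ofReal (Ψ X)) with hΨ₂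
  have hΨ₂m : Measurable Ψ₂ := hΨe.indicator (measurableSet_lt measurable_const hΨe)
  have hpt : ∀ X, ENNReal.ofReal (Ψ X) ≤ A.indicator (fun _ => C₁) X + Ψ₂ X := by
    intro X
    by_cases hX : X ∈ E
    · have hXA : X ∈ A := ⟨hX.1, hX.2.1⟩
      rw [indicator_of_mem hXA]
      by_cases hlt : C₁ < ENNReal.ofReal (Ψ X)
      · have : Ψ₂ X = ENNReal.ofReal (Ψ X) := indicator_of_mem (s := {X | C₁ < ENNReal.ofReal (Ψ X)}) hlt _
        rw [this]; exact le_add_self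
      · exact (not_lt.1 hlt).trans le_self_add
    · simp [hΨ, hX]
  -- Step F
  have hF : ∀ x, ∫⁻ t, Ψ₂ (x, t) ≤
      (ball y ρ).indicator (fun x => C₂ * ENNReal.ofReal V * β x ^ n) x := by
    intro x
    by_cases hx : x ∈ ball y ρ
    · rw [indicator_of_mem hx]
      have hTm : MeasurableSet {t | (x, t) ∈ E} := hEm.preimage measurable_prodMk_left
      have hb := (ae_restrict_iff' measurableSet_Ioo).1 (hβ x hx)
      calc ∫⁻ t, Ψ₂ (x, t) ≤ ∫⁻ t, {t | (x, t) ∈ E}.indicator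
            (fun t => C₂ * β x ^ n * ENNReal.ofReal (vt (x, t))) t := by
            refine lintegral_mono_ae ?_
            filter_upwards [hb] with t hbt
            by_cases hE' : (x, t) ∈ E
            · rw [indicator_of_mem (show t ∈ {t | (x, t) ∈ E} from hE')]
              by_cases hlt : C₁ < ENNReal.ofReal (Ψ (x, t))
              · have e1 : Ψ₂ (x, t) = ENNReal.ofReal (Ψ (x, t)) :=
                  indicator_of_mem (s := {X | C₁ < ENNReal.ofReal (Ψ X)}) hlt _
                have e2 : Ψ (x, t) = w (g (x, t)) * vt (x, t) * |(H (x, t)).det| :=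
                  indicator_of_mem hE' _
                rw [e1]
                rw [e2] at hlt ⊢
                rcases hmain (x, t) hE'.1 hE'.2.1 hE'.2.2.1 hE'.2.2.2.1 with h | h
                · exact absurd hlt (not_lt.2 h)
                · have e3 : w (g (x, t)) * vt (x, t) * |(H (x, t)).det| =
                      w (g (x, t)) * |(H (x, t)).det| * vt (x, t) := by ring
                  rw [e3, ENNReal.ofReal_mul (mul_nonneg (hw0 _) (abs_nonneg _))]
                  refine mul_le_mul_left ?_ _
                  refine h.trans (mul_le_mul_right ?_ _)
                  exact pow_le_pow_left' (hbt hE'.1.2) n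
              · have : Ψ₂ (x, t) = 0 :=
                  indicator_of_notMem (s := {X | C₁ < ENNReal.ofReal (Ψ X)}) hlt _
                rw [this]; exact zero_le
            · have : Ψ (x, t) = 0 := indicator_of_notMem hE' _
              have : Ψ₂ (x, t) = 0 := by
                simp only [hΨ₂, indicator_apply, this]; simp
              rw [this]; exact zero_le
        _ = C₂ * β x ^ n * ∫⁻ t in {t | (x, t) ∈ E}, ENNReal.ofReal (vt (x, t)) := by
            rw [lintegral_indicator hTm, lintegral_const_mul'']
            refine AEMeasurable.ennreal_ofReal ?_
            refine ContinuousOn.aemeasurable ?_ hTm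
            exact cvt.comp (f := fun t : ℝ => (x, t)) (by fun_prop) fun x hx => hx
        _ ≤ C₂ * β x ^ n * ENNReal.ofReal V := mul_le_mul_right (fgt_time D hV x) _
        _ = _ := by ring
    · have : ∀ t, Ψ₂ (x, t) = 0 := fun t => by
        have hE' : (x, t) ∉ E := fun h => hx h.1.1
        have : Ψ (x, t) = 0 := indicator_of_notMem hE' _
        simp only [hΨ₂, indicator_apply, this]; simp
      simp [this]
  -- assembling
  calc ENNReal.ofReal (m / 2) * ∫⁻ p in closedBall 0 (m / (4 * ρ)), ENNReal.ofReal (w p)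
      = ∫⁻ p in closedBall 0 (m / (4 * ρ)), ENNReal.ofReal (m / 2) * ENNReal.ofReal (w p) := by
        rw [lintegral_const_mul _ hw.measurable.ennreal_ofReal]
    _ ≤ ∫⁻ p in closedBall 0 (m / (4 * ρ)), ∫⁻ t in Ioo t₀ t₁,
          ENNReal.ofReal (w p * deriv (G p) t) := by
        refine setLIntegral_mono' measurableSet_closedBall fun p hp => ?_
        have : ∀ t, ENNReal.ofReal (w p * deriv (G p) t) =
            ENNReal.ofReal (w p) * ENNReal.ofReal (deriv (G p) t) := fun t =>
          ENNReal.ofReal_mul (hw0 p)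
        simp_rw [this]
        rw [lintegral_const_mul' _ _ ENNReal.ofReal_ne_top, mul_comm]
        exact mul_le_mul_right (hA p hp) _
    _ ≤ ∫⁻ p, ∫⁻ t in Ioo t₀ t₁, ENNReal.ofReal (w p * deriv (G p) t) :=
        setLIntegral_le_lintegral _ _
    _ = ∫⁻ t in Ioo t₀ t₁, ∫⁻ p, ENNReal.ofReal (w p * deriv (G p) t) := by
        refine lintegral_lintegral_swap ?_
        refine Measurable.aemeasurable ?_
        exact ((hw.measurable.comp measurable_fst).mul hder).ennreal_ofReal
    _ ≤ ∫⁻ t in Ioo t₀ t₁, ∫⁻ x, ENNReal.ofReal (Ψ (x, t)) :=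
        setLIntegral_mono' measurableSet_Ioo hC
    _ ≤ ∫⁻ t, ∫⁻ x, ENNReal.ofReal (Ψ (x, t)) := setLIntegral_le_lintegral _ _
    _ = ∫⁻ x, ∫⁻ t, ENNReal.ofReal (Ψ (x, t)) := by
        refine lintegral_lintegral_swap ?_
        exact (hΨe.comp measurable_swap).aemeasurable
    _ ≤ ∫⁻ x, ∫⁻ t, (A.indicator (fun _ => C₁) (x, t) + Ψ₂ (x, t)) :=
        lintegral_mono fun x => lintegral_mono fun t => hpt (x, t)
    _ = (∫⁻ x, ∫⁻ t, A.indicator (fun _ => C₁) (x, t)) + ∫⁻ x, ∫⁻ t, Ψ₂ (x, t) := by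
        have hmi : Measurable (A.indicator (fun _ => C₁)) := measurable_const.indicator hAm
        rw [← lintegral_add_left hmi.lintegral_prod_right']
        refine lintegral_congr fun x => ?_
        exact lintegral_add_left (hmi.comp measurable_prodMk_left) _
    _ ≤ C₁ * volume A + ∫⁻ x, (ball y ρ).indicator (fun x => C₂ * ENNReal.ofReal V * β x ^ n) x := by
        refine add_le_add (le_of_eq ?_) (lintegral_mono hF)
        have hmi : Measurable (A.indicator (fun _ => C₁)) := measurable_const.indicator hAm
        rw [← lintegral_prod _ hmi.aemeasurable, lintegral_indicator hAm, setLIntegral_const]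
        rfl
    _ = _ := by
        rw [lintegral_indicator measurableSet_ball, lintegral_const_mul' _ _
          (ENNReal.mul_ne_top hC₂ ENNReal.ofReal_ne_top)]

open scoped MatrixOrder Matrix.Norms.L2Operator in
lemma fgt_psd (M a : Matrix (Fin n) (Fin n) ℝ) (hM : M.PosSemidef) {ν : ℝ} (hν : 1 ≤ ν)
    (ha : ∀ ξ : Fin n → ℝ, ν⁻¹ * (∑ i, ξ i ^ 2) ≤ ∑ i, ∑ j, a i j * ξ i * ξ j) :
    0 ≤ M.trace ∧ M.det ≤ M.trace ^ n ∧ M.trace ≤ ν * ∑ i, ∑ j, a i j * M i j := by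
  have h0 := hM.eigenvalues_nonneg
  have htr : M.trace = ∑ i, hM.1.eigenvalues i := by
    simpa using hM.1.trace_eq_sum_eigenvalues
  have hdet : M.det = ∏ i, hM.1.eigenvalues i := by
    simpa using hM.1.det_eq_prod_eigenvalues
  refine ⟨?_, ?_, ?_⟩
  · rw [htr]; exact Finset.sum_nonneg fun i _ => h0 i
  · rw [hdet]
    calc ∏ i, hM.1.eigenvalues i ≤ ∏ _i : Fin n, M.trace := by
          refine Finset.prod_le_prod (fun i _ => h0 i) fun i _ => ?_
          rw [htr]
          exact Finset.single_le_sum (f := hM.1.eigenvalues) (fun i _ => h0 i) (Finset.mem_univ i)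
      _ = _ := by simp
  · obtain ⟨B, hB⟩ : ∃ B : Matrix (Fin n) (Fin n) ℝ, M = B.conjTranspose * B := by
      obtain ⟨B, hB⟩ := CStarAlgebra.nonneg_iff_eq_star_mul_self.1 hM.nonneg
      exact ⟨B, hB⟩
    have hMij : ∀ i j, M i j = ∑ k, B k i * B k j := fun i j => by
      rw [hB, Matrix.mul_apply]; simp [Matrix.conjTranspose_apply]
    have e1 : M.trace = ∑ k, ∑ i, B k i ^ 2 := by
      rw [Finset.sum_comm]
      simp only [Matrix.trace, Matrix.diag_apply, hMij]
      exact Finset.sum_congr rfl fun i _ => Finset.sum_congr rfl fun k _ => by ring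
    have e2 : ∑ i, ∑ j, a i j * M i j = ∑ k, ∑ i, ∑ j, a i j * B k i * B k j := by
      symm
      rw [Finset.sum_comm]
      refine Finset.sum_congr rfl fun i _ => ?_
      rw [Finset.sum_comm]
      refine Finset.sum_congr rfl fun j _ => ?_
      rw [hMij, Finset.mul_sum]
      exact Finset.sum_congr rfl fun k _ => by ring
    rw [e1, e2, Finset.mul_sum]
    refine Finset.sum_le_sum fun k _ => ?_
    have h := mul_le_mul_of_nonneg_left (ha (B k)) (show (0:ℝ) ≤ ν by linarith)
    rw [← mul_assoc, mul_inv_cancel₀ (by linarith), one_mul] at h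
    exact h

lemma fgt_det (H : En n →L[ℝ] En n) (hsym : ∀ ξ η, ⟪H ξ, η⟫ = ⟪H η, ξ⟫)
    (hneg : ∀ ξ, ⟪H ξ, ξ⟫ ≤ 0) (a : Matrix (Fin n) (Fin n) ℝ) {ν : ℝ} (hν : 1 ≤ ν)
    (ha : ∀ ξ : Fin n → ℝ, ν⁻¹ * (∑ i, ξ i ^ 2) ≤ ∑ i, ∑ j, a i j * ξ i * ξ j) :
    0 ≤ -∑ i, ∑ j, a i j * (H (EuclideanSpace.single i 1)) j ∧
    |H.det| ≤ (ν * -∑ i, ∑ j, a i j * (H (EuclideanSpace.single i 1)) j) ^ n := by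
  set M : Matrix (Fin n) (Fin n) ℝ := fun i j => -(H (EuclideanSpace.single i 1)) j with hMdef
  have hent : ∀ i j, (H (EuclideanSpace.single i 1)) j =
      ⟪H (EuclideanSpace.single i 1), EuclideanSpace.single j (1:ℝ)⟫ := fun i j => by
    simp [EuclideanSpace.inner_single_right]
  have hHerm : M.IsHermitian := by
    ext i j
    show -(H (EuclideanSpace.single j 1)) i = -(H (EuclideanSpace.single i 1)) j
    rw [hent, hent, hsym]
  have hM : M.PosSemidef := by
    refine Matrix.PosSemidef.of_dotProduct_mulVec_nonneg hHerm fun x => ?_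
    have hx := hneg (WithLp.toLp 2 x)
    have hxs : (WithLp.toLp 2 x : En n) = ∑ i, x i • EuclideanSpace.single i (1:ℝ) := by
      ext k; simp [Finset.sum_apply, Pi.single_apply]
    have : ⟪H (WithLp.toLp 2 x), WithLp.toLp 2 x⟫ = - (star x ⬝ᵥ M.mulVec x) := by
      rw [PiLp.inner_apply]
      have hH : ∀ k, (H (WithLp.toLp 2 x)) k = ∑ i, x i * (H (EuclideanSpace.single i 1)) k := by
        intro k
        rw [hxs, map_sum]
        simp
      simp only [hH, dotProduct, Matrix.mulVec, hMdef]
      simp only [star_trivial, RCLike.inner_apply, conj_trivial]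
      rw [← Finset.sum_neg_distrib]
      refine Finset.sum_congr rfl fun k _ => ?_
      rw [Finset.mul_sum, Finset.mul_sum, ← Finset.sum_neg_distrib]
      refine Finset.sum_congr rfl fun i _ => ?_
      rw [hent, hent, hsym]
      ring
    linarith
  obtain ⟨h0, h1, h2⟩ := fgt_psd M a hM hν ha
  have e : ∑ i, ∑ j, a i j * M i j = -∑ i, ∑ j, a i j * (H (EuclideanSpace.single i 1)) j := by
    simp [hMdef]
  rw [e] at h2
  have hdet : |H.det| = M.det := by
    have hm : LinearMap.toMatrix (EuclideanSpace.basisFun (Fin n) ℝ).toBasis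
        (EuclideanSpace.basisFun (Fin n) ℝ).toBasis (H : En n →ₗ[ℝ] En n) = -M.transpose := by
      ext i j
      rw [LinearMap.toMatrix_apply]
      show _ = - -(H (EuclideanSpace.single j 1)) i
      simp
    have : H.det = (-M.transpose).det := by
      rw [← hm, LinearMap.det_toMatrix]
    rw [this, Matrix.det_neg, Matrix.det_transpose, abs_mul, abs_pow, abs_neg, abs_one, one_pow,
      one_mul, abs_of_nonneg hM.det_nonneg]
  have hν0 : 0 < ν := by linarith
  refine ⟨?_, ?_⟩
  · exact nonneg_of_mul_nonneg_right (h0.trans h2) hν0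
  · rw [hdet]
    exact h1.trans (pow_le_pow_left₀ h0 h2 n)

/-- Spatial gradient as a vector. -/
def fgtg (u : En n × ℝ → ℝ) (X : En n × ℝ) : En n :=
  ∑ j, Dx u j X • EuclideanSpace.single j (1 : ℝ)

/-- Spatial Hessian as a linear map. -/
def fgtH (u : En n × ℝ → ℝ) (X : En n × ℝ) : En n →L[ℝ] En n :=
  ∑ i, ∑ j, Dxx u i j X •
    ((innerSL ℝ (EuclideanSpace.single i (1 : ℝ) : En n)).smulRight
      (EuclideanSpace.single j (1 : ℝ) : En n))

lemma fgt_dual (l : En n →L[ℝ] ℝ) :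
    l = ∑ i, l (EuclideanSpace.single i 1) • innerSL ℝ (EuclideanSpace.single i (1 : ℝ) : En n) := by
  ext x
  have hxs : x = ∑ i, x i • EuclideanSpace.single i (1:ℝ) := by
    ext k; simp [Finset.sum_apply, Pi.single_apply]
  conv_lhs => rw [hxs, map_sum]
  simp [EuclideanSpace.inner_single_left, mul_comm]

lemma fgtg_apply (u : En n × ℝ → ℝ) (X : En n × ℝ) (j : Fin n) : (fgtg u X) j = Dx u j X := by
  simp [fgtg, Finset.sum_apply, Pi.single_apply]

lemma fgtH_apply (u : En n × ℝ → ℝ) (X : En n × ℝ) (i j : Fin n) :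
    (fgtH u X (EuclideanSpace.single i 1)) j = Dxx u i j X := by
  simp [fgtH, Finset.sum_apply, Pi.single_apply, EuclideanSpace.inner_single_left]

/-- The quadratic barrier. -/
def fgtφ (A c d : ℝ) (z : En n) (X : En n × ℝ) : ℝ := A * ‖X.1 - z‖ ^ 2 - c * X.2 + d

lemma fgt_data {u : En n × ℝ → ℝ} {Q : Set (En n × ℝ)} (hu : IsC21 u Q) (A c d : ℝ) (z y : En n)
    {ρ t₀ t₁ : ℝ} (hQ : closedBall y ρ ×ˢ Icc t₀ t₁ ⊆ Q) :
    FgtData (fun X => u X - fgtφ A c d z X) (fun X => Dt u X + c)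
      (fun X => fgtg u X - (2 * A) • (X.1 - z))
      (fun X => fgtH u X - (2 * A) • ContinuousLinearMap.id ℝ (En n)) y ρ t₀ t₁ where
  cv := (hu.cont.mono hQ).sub (by unfold fgtφ; fun_prop)
  cvt := (hu.cont_t.mono hQ).add continuousOn_const
  cg := by
    refine ContinuousOn.sub ?_ (by fun_prop)
    refine continuousOn_finsetSum _ fun j _ => ?_
    exact ((hu.cont_x j).mono hQ).smul continuousOn_const
  cH := by
    refine ContinuousOn.sub ?_ continuousOn_const
    refine continuousOn_finsetSum _ fun i _ => continuousOn_finsetSum _ fun j _ => ?_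
    exact ((hu.cont_xx i j).mono hQ).smul continuousOn_const
  dt := fun x hx t ht => by
    have h := (hu.diff_t (x, t) (hQ ⟨hx, ht⟩)).hasDerivAt
    have h2 : HasDerivAt (fun t => fgtφ A c d z (x, t)) (-c) t := by
      unfold fgtφ
      have := (((hasDerivAt_id t).const_mul c).const_sub (A * ‖x - z‖ ^ 2)).add_const d
      simpa using this
    have := h.sub h2
    rw [sub_neg_eq_add] at this
    exact this
  dx := fun x hx t ht => by
    have h := (hu.diff_x (x, t) (hQ ⟨hx, ht⟩)).hasFDerivAt
    have h2 : HasFDerivAt (fun x => fgtφ A c d z (x, t)) (innerSL ℝ ((2 * A) • (x - z))) x := by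
      unfold fgtφ
      have h3 : HasFDerivAt (fun x : En n => ‖x - z‖ ^ 2) (2 • (innerSL ℝ (x - z))) x := by
        simpa using ((hasFDerivAt_id x).sub_const z).norm_sq
      have := ((h3.const_mul A).sub_const (c * t)).add_const d
      refine this.congr_fderiv ?_
      ext w
      simp; ring
    have h4 := h.sub h2
    refine h4.congr_fderiv ?_
    rw [map_sub]
    congr 1
    simp only [fgtg, map_sum, map_smul]
    exact fgt_dual _
  dxx := fun x hx t ht => by
    have h : HasFDerivAt (fun x => fgtg u (x, t)) (fgtH u (x, t)) x := by
      have h1 : ∀ j ∈ (Finset.univ : Finset (Fin n)),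
          HasFDerivAt (fun x => Dx u j (x, t) • (EuclideanSpace.single j (1 : ℝ) : En n))
          ((fderiv ℝ (fun x => Dx u j (x, t)) x).smulRight
            (EuclideanSpace.single j (1 : ℝ) : En n)) x := fun j _ =>
        ((hu.diff_xx j (x, t) (hQ ⟨hx, ht⟩)).hasFDerivAt).smul_const _
      have h2 := HasFDerivAt.fun_sum h1
      refine h2.congr_fderiv ?_
      unfold fgtH
      rw [Finset.sum_comm]
      refine Finset.sum_congr rfl fun j _ => ?_
      rw [fgt_dual (fderiv ℝ (fun x => Dx u j (x, t)) x)]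
      ext w k
      by_cases hk : k = j
      · subst hk
        simp [Finset.sum_apply, Dxx, Dx]
      · simp [Finset.sum_apply, Dxx, Dx, hk]
    have h2 : HasFDerivAt (fun x : En n => (2 * A) • (x - z))
        ((2 * A) • ContinuousLinearMap.id ℝ (En n)) x :=
      ((hasFDerivAt_id x).sub_const z).const_smul (2 * A)
    exact h.sub h2

lemma fgt_symm {v vt : En n × ℝ → ℝ} {g : En n × ℝ → En n} {H : En n × ℝ → En n →L[ℝ] En n}
    {y : En n} {ρ t₀ t₁ : ℝ} (D : FgtData v vt g H y ρ t₀ t₁) {X : En n × ℝ}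
    (hX : X ∈ box y ρ t₀ t₁) (ξ η : En n) : ⟪H X ξ, η⟫ = ⟪H X η, ξ⟫ := by
  obtain ⟨x, t⟩ := X
  have ht : t ∈ Icc t₀ t₁ := Ioo_subset_Icc_self hX.2
  have h1 : ∀ᶠ z in nhds x, HasFDerivAt (fun x => v (x, t)) (innerSL ℝ (g (z, t))) z := by
    filter_upwards [isOpen_ball.mem_nhds hX.1] with z hz
    exact D.dx z (ball_subset_closedBall hz) t ht
  have h2 := (innerSL ℝ (E := En n)).hasFDerivAt.comp x
    (D.dxx x (ball_subset_closedBall hX.1) t ht)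
  have := second_derivative_symmetric_of_eventually_of_real h1 h2 ξ η
  exact this

lemma fgt_trace {a : Matrix (Fin n) (Fin n) ℝ} {ν : ℝ} (hν : 1 ≤ ν)
    (h : (∑ i, ∑ j, (a i j) ^ 2) ≤ ν ^ 2) : ∑ i, a i i ≤ n * ν := by
  have : ∀ i ∈ (Finset.univ : Finset (Fin n)), a i i ≤ ν := fun i _ => by
    have h1 : (a i i) ^ 2 ≤ ∑ j, (a i j) ^ 2 :=
      Finset.single_le_sum (f := fun j => (a i j) ^ 2) (fun j _ => sq_nonneg _) (Finset.mem_univ i)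
    have h2 : ∑ j, (a i j) ^ 2 ≤ ∑ i, ∑ j, (a i j) ^ 2 :=
      Finset.single_le_sum (f := fun i => ∑ j, (a i j) ^ 2)
        (fun i _ => Finset.sum_nonneg fun j _ => sq_nonneg _) (Finset.mem_univ i)
    exact (abs_le_of_sq_le_sq' (h1.trans (h2.trans h)) (by linarith)).2
  simpa using Finset.sum_le_card_nsmul _ _ _ this

lemma fgt_point {u : En n × ℝ → ℝ} {a : En n × ℝ → Matrix (Fin n) (Fin n) ℝ} {b : En n × ℝ → En n}
    {ν A c N k ρ : ℝ} {y : En n} {X : En n × ℝ} (hν : 1 ≤ ν) (hX : X.1 ∈ ball y ρ)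
    (ha : (∀ ξ : Fin n → ℝ, ν⁻¹ * (∑ i, ξ i ^ 2) ≤ ∑ i, ∑ j, a X i j * ξ i * ξ j) ∧
      (∑ i, ∑ j, (a X i j) ^ 2) ≤ ν ^ 2)
    (hpde : 0 ≤ -Dt u X + Lop a b u X) (hA : 0 ≤ A) (hN : c + 2 * A * (n * ν) ≤ N)
    (hκ : 2 * A * ρ ≤ k) :
    Dt u X + c - ∑ i, ∑ j, a X i j * ((fgtH u X - (2 * A) • ContinuousLinearMap.id ℝ (En n))
      (EuclideanSpace.single i 1)) j ≤ N + ‖b X‖ * (‖fgtg u X - (2 * A) • (X.1 - y)‖ + k) := by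
  have e1 : ∑ i, ∑ j, a X i j * ((fgtH u X - (2 * A) • ContinuousLinearMap.id ℝ (En n))
      (EuclideanSpace.single i 1)) j = ∑ i, ∑ j, a X i j * Dxx u i j X - 2 * A * ∑ i, a X i i := by
    rw [Finset.mul_sum, ← Finset.sum_sub_distrib]
    refine Finset.sum_congr rfl fun i _ => ?_
    have : ∀ j, a X i j * ((fgtH u X - (2 * A) • ContinuousLinearMap.id ℝ (En n))
      (EuclideanSpace.single i 1)) j = a X i j * Dxx u i j X -
        (if j = i then 2 * A * a X i j else 0) := fun j => by
      have hh : ((fgtH u X - (2 * A) • ContinuousLinearMap.id ℝ (En n))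
        (EuclideanSpace.single i 1)) j = Dxx u i j X - if j = i then 2 * A else 0 := by
        rw [← fgtH_apply]
        simp
      rw [hh]
      split_ifs <;> ring
    simp only [this]
    rw [Finset.sum_sub_distrib]
    simp
  have e2 : ∑ i, b X i * Dx u i X = ⟪b X, fgtg u X⟫ := by
    rw [PiLp.inner_apply]
    refine Finset.sum_congr rfl fun i _ => ?_
    rw [fgtg_apply]
    simp [mul_comm]
  have h1 : ⟪b X, fgtg u X⟫ ≤ ‖b X‖ * ‖fgtg u X‖ := real_inner_le_norm _ _
  have h2 : ‖fgtg u X‖ ≤ ‖fgtg u X - (2 * A) • (X.1 - y)‖ + k := by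
    have h3 := norm_add_le (fgtg u X - (2 * A) • (X.1 - y)) ((2 * A) • (X.1 - y))
    rw [sub_add_cancel] at h3
    have h4 : ‖(2 * A) • (X.1 - y)‖ ≤ 2 * A * ρ := by
      rw [norm_smul, Real.norm_eq_abs, abs_of_nonneg (by positivity)]
      exact mul_le_mul_of_nonneg_left (mem_ball_iff_norm.1 hX).le (by positivity)
    linarith
  have h5 := mul_le_mul_of_nonneg_left h2 (norm_nonneg (b X))
  have h6 := mul_le_mul_of_nonneg_left (fgt_trace hν ha.2) (show 0 ≤ 2 * A by positivity)
  unfold Lop at hpde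
  rw [e2] at hpde
  rw [e1]
  linarith

lemma fgt_abp {u : En n × ℝ → ℝ} {a : En n × ℝ → Matrix (Fin n) (Fin n) ℝ} {b : En n × ℝ → En n}
    {Q : Set (En n × ℝ)} {ν A c d N k ρ t₀ t₁ m V : ℝ} {y x₀ : En n} {β : En n → ℝ≥0∞}
    (hν : 1 ≤ ν) (hρ : 0 < ρ) (ht : t₀ < t₁)
    (hu : IsC21 u Q) (hQ : closedBall y ρ ×ˢ Icc t₀ t₁ ⊆ Q)
    (ha : UnifParabolic ν a (box y ρ t₀ t₁))
    (hpde : ∀ X ∈ box y ρ t₀ t₁, 0 ≤ -Dt u X + Lop a b u X)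
    (hA : 0 ≤ A) (hN : c + 2 * A * (n * ν) ≤ N) (hk : 0 < k) (hκ : 2 * A * ρ ≤ k)
    (hlat : ∀ x ∈ sphere y ρ, ∀ t ∈ Icc t₀ t₁, u (x, t) - fgtφ A c d y (x, t) ≤ 0)
    (hbot : ∀ x ∈ closedBall y ρ, u (x, t₀) - fgtφ A c d y (x, t₀) ≤ 0)
    (hx₀ : x₀ ∈ closedBall y ρ) (hm : m ≤ u (x₀, t₁) - fgtφ A c d y (x₀, t₁))
    (hV : ∀ X ∈ box y ρ t₀ t₁, u X - fgtφ A c d y X ≤ V)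
    (hβ : ∀ x ∈ ball y ρ, ∀ᵐ t ∂(volume.restrict (Ioo t₀ t₁)), (‖b (x, t)‖₊ : ℝ≥0∞) ≤ β x) :
    ENNReal.ofReal (m / 2) *
        ∫⁻ p in closedBall (0 : En n) (m / (4 * ρ)), ENNReal.ofReal (((‖p‖ + k) ^ n)⁻¹) ≤
      ENNReal.ofReal (2 * N * (2 * ν * N / k) ^ n) *
        volume {X | X ∈ box y ρ t₀ t₁ ∧ 0 < u X - fgtφ A c d y X} +
      ENNReal.ofReal ((2 * ν) ^ n) * ENNReal.ofReal V * ∫⁻ x in ball y ρ, β x ^ n := by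
  have D := fgt_data hu A c d y y hQ
  have hν0 : 0 < ν := by linarith
  refine fgt_core (v := fun X => u X - fgtφ A c d y X) (w := fun p => ((‖p‖ + k) ^ n)⁻¹)
    (B := fun X => (‖b X‖₊ : ℝ≥0∞)) hρ ht D hlat hbot hx₀ hm hV ?_ ?_ ofReal_ne_top hβ ?_
  · refine Continuous.inv₀ (by fun_prop) fun p => ?_
    positivity
  · intro p; positivity
  intro X hX hv hvt hneg
  have hdet := fgt_det _ (fun ξ η => fgt_symm D hX ξ η) hneg (a X) hν (ha X hX).1
  have hp := fgt_point hν hX.1 (ha X hX) (hpde X hX) hA hN hκ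
  simp only at hdet hvt ⊢
  generalize (fgtH u X - (2 * A) • ContinuousLinearMap.id ℝ (En n)) = H at hdet hp ⊢
  generalize (fgtg u X - (2 * A) • (X.1 - y)) = p at hp ⊢
  generalize (∑ i, ∑ j, a X i j * (H (EuclideanSpace.single i 1)) j) = T at hdet hp
  obtain ⟨hT, hd⟩ := hdet
  have hpk : k ≤ ‖p‖ + k := by simp
  have hpk0 : 0 < ‖p‖ + k := by linarith
  rcases le_total (‖b X‖ * (‖p‖ + k)) N with h | h
  · left
    apply ENNReal.ofReal_le_ofReal
    have h1 : Dt u X + c ≤ 2 * N := by linarith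
    have h2 : |H.det| ≤ (2 * ν * N) ^ n := hd.trans (pow_le_pow_left₀ (by positivity) (by nlinarith) n)
    have h3 : ((‖p‖ + k) ^ n)⁻¹ ≤ (k ^ n)⁻¹ :=
      inv_anti₀ (by positivity) (pow_le_pow_left₀ hk.le hpk n)
    have hN0 : 0 ≤ N := le_trans (by positivity) h
    calc ((‖p‖ + k) ^ n)⁻¹ * (Dt u X + c) * |H.det|
        ≤ (k ^ n)⁻¹ * (2 * N) * (2 * ν * N) ^ n := by gcongr
      _ = _ := by rw [div_pow]; ring
  · right
    have h2 : |H.det| ≤ (2 * ν * (‖b X‖ * (‖p‖ + k))) ^ n :=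
      hd.trans (pow_le_pow_left₀ (by positivity) (by nlinarith) n)
    have h4 : ((‖p‖ + k) ^ n)⁻¹ * |H.det| ≤ (2 * ν) ^ n * ‖b X‖ ^ n := by
      calc _ ≤ ((‖p‖ + k) ^ n)⁻¹ * (2 * ν * (‖b X‖ * (‖p‖ + k))) ^ n := by gcongr
        _ = _ := by
          rw [mul_pow, mul_pow ‖b X‖]
          field_simp
    refine (ENNReal.ofReal_le_ofReal h4).trans ?_
    rw [ENNReal.ofReal_mul (by positivity), ENNReal.ofReal_pow (norm_nonneg _)]
    simp [enorm_eq_nnnorm]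

lemma fgt_abp_real {u : En n × ℝ → ℝ} {a : En n × ℝ → Matrix (Fin n) (Fin n) ℝ}
    {b : En n × ℝ → En n}
    {Q : Set (En n × ℝ)} {ν A c d N k ρ t₀ t₁ m V I τ σ : ℝ} {y x₀ : En n} {β : En n → ℝ≥0∞}
    (hν : 1 ≤ ν) (hρ : 0 < ρ) (ht : t₀ < t₁)
    (hu : IsC21 u Q) (hQ : closedBall y ρ ×ˢ Icc t₀ t₁ ⊆ Q)
    (ha : UnifParabolic ν a (box y ρ t₀ t₁))
    (hpde : ∀ X ∈ box y ρ t₀ t₁, 0 ≤ -Dt u X + Lop a b u X)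
    (hA : 0 ≤ A) (hN : c + 2 * A * (n * ν) ≤ N) (hk : 0 < k) (hκ : 2 * A * ρ ≤ k)
    (hlat : ∀ x ∈ sphere y ρ, ∀ t ∈ Icc t₀ t₁, u (x, t) - fgtφ A c d y (x, t) ≤ 0)
    (hbot : ∀ x ∈ closedBall y ρ, u (x, t₀) - fgtφ A c d y (x, t₀) ≤ 0)
    (hx₀ : x₀ ∈ closedBall y ρ) (hm : m ≤ u (x₀, t₁) - fgtφ A c d y (x₀, t₁))
    (hV : ∀ X ∈ box y ρ t₀ t₁, u X - fgtφ A c d y X ≤ V)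
    (hβ : ∀ x ∈ ball y ρ, ∀ᵐ t ∂(volume.restrict (Ioo t₀ t₁)), (‖b (x, t)‖₊ : ℝ≥0∞) ≤ β x)
    (hI : ENNReal.ofReal I ≤
      ∫⁻ p in closedBall (0 : En n) (m / (4 * ρ)), ENNReal.ofReal (((‖p‖ + k) ^ n)⁻¹))
    (hτ : volume {X | X ∈ box y ρ t₀ t₁ ∧ 0 < u X - fgtφ A c d y X} ≤ ENNReal.ofReal τ)
    (hσ : ∫⁻ x in ball y ρ, β x ^ n ≤ ENNReal.ofReal σ)
    (hN0 : 0 ≤ N) (hτ0 : 0 ≤ τ) (hσ0 : 0 ≤ σ) (hV0 : 0 ≤ V) (hm0 : 0 ≤ m) :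
    m / 2 * I ≤ 2 * N * (2 * ν * N / k) ^ n * τ + (2 * ν) ^ n * V * σ := by
  have h := fgt_abp hν hρ ht hu hQ ha hpde hA hN hk hκ hlat hbot hx₀ hm hV hβ
  have h1 : ENNReal.ofReal (m / 2 * I) ≤
      ENNReal.ofReal (2 * N * (2 * ν * N / k) ^ n * τ + (2 * ν) ^ n * V * σ) := by
    rw [ENNReal.ofReal_mul (by positivity), ENNReal.ofReal_add (by positivity) (by positivity),
      ENNReal.ofReal_mul (by positivity), ENNReal.ofReal_mul (p := (2 * ν) ^ n * V) (by positivity),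
      ENNReal.ofReal_mul (p := (2 * ν) ^ n) (by positivity)]
    refine le_trans ?_ (h.trans ?_)
    · gcongr
    · gcongr
  exact (ENNReal.ofReal_le_ofReal_iff (by positivity)).1 h1

/-- Volume of the unit ball. -/
def fgtω (n : ℕ) : ℝ := (volume (ball (0 : En n) 1)).toReal

lemma fgtω_pos : 0 < fgtω n :=
  ENNReal.toReal_pos (measure_ball_pos _ _ one_pos).ne' measure_ball_lt_top.ne

lemma fgt_vol_ball (y : En n) {ρ : ℝ} (hρ : 0 < ρ) :
    volume (ball y ρ) = ENNReal.ofReal (fgtω n * ρ ^ n) := by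
  rw [Measure.addHaar_ball_of_pos _ _ hρ, mul_comm (fgtω n), ENNReal.ofReal_mul (by positivity), fgtω,
    ENNReal.ofReal_toReal measure_ball_lt_top.ne]
  simp

lemma fgt_vol_cball (y : En n) {ρ : ℝ} (hρ : 0 < ρ) :
    volume (closedBall y ρ) = ENNReal.ofReal (fgtω n * ρ ^ n) := by
  rw [Measure.addHaar_closedBall _ _ hρ.le, mul_comm (fgtω n), ENNReal.ofReal_mul (by positivity),
    fgtω, ENNReal.ofReal_toReal measure_ball_lt_top.ne]
  simp

lemma fgt_vol_pcyl (Y : En n × ℝ) {r : ℝ} (hr : 0 < r) :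
    volume (pcyl Y r) = ENNReal.ofReal (fgtω n * r ^ n * r ^ 2) := by
  have : 0 < fgtω n := fgtω_pos
  rw [pcyl, box, Measure.volume_eq_prod, Measure.prod_prod, fgt_vol_ball _ hr, Real.volume_Ioo,
    ← ENNReal.ofReal_mul (by positivity)]
  congr 2; ring

lemma fgt_int_simple {R k : ℝ} (hR : 0 < R) (hk : 0 < k) :
    ENNReal.ofReal (fgtω n * R ^ n * ((R + k) ^ n)⁻¹) ≤
      ∫⁻ p in closedBall (0 : En n) R, ENNReal.ofReal (((‖p‖ + k) ^ n)⁻¹) := by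
  have : 0 < fgtω n := fgtω_pos
  calc _ = ∫⁻ p in closedBall (0 : En n) R, ENNReal.ofReal (((R + k) ^ n)⁻¹) := by
        rw [setLIntegral_const, fgt_vol_cball _ hR, ← ENNReal.ofReal_mul (by positivity), mul_comm]
    _ ≤ _ := by
        refine setLIntegral_mono' measurableSet_closedBall fun p hp => ?_
        apply ENNReal.ofReal_le_ofReal
        have : ‖p‖ ≤ R := by simpa using hp
        apply inv_anti₀ (by positivity)
        gcongr

lemma fgt_int_log (hn : 0 < n) {k : ℝ} (hk : 0 < k) (L : ℕ) : ∀ R : ℝ, 0 < R → k ≤ R / 2 ^ L →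
    ENNReal.ofReal (L * (fgtω n / 2 ^ (n + 1))) ≤
      ∫⁻ p in closedBall (0 : En n) R, ENNReal.ofReal (((‖p‖ + k) ^ n)⁻¹) := by
  have hω : 0 < fgtω n := fgtω_pos
  induction L with
  | zero => intro R _ _; simp
  | succ L ih =>
    intro R hR hkR
    have h1 := ih (R / 2) (by positivity) (by rw [pow_succ] at hkR; rw [div_div, mul_comm]; exact hkR)
    have hkR' : k ≤ R := hkR.trans (div_le_self hR.le (one_le_pow₀ (by norm_num)))
    have hsub : closedBall (0 : En n) (R / 2) ⊆ closedBall 0 R := closedBall_subset_closedBall (by linarith)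
    have h2 : ENNReal.ofReal (fgtω n / 2 ^ (n + 1)) ≤
        ∫⁻ p in closedBall (0 : En n) R \ closedBall 0 (R / 2), ENNReal.ofReal (((‖p‖ + k) ^ n)⁻¹) := by
      calc _ ≤ ∫⁻ p in closedBall (0 : En n) R \ closedBall 0 (R / 2),
            ENNReal.ofReal (((2 * R) ^ n)⁻¹) := by
            rw [setLIntegral_const, measure_sdiff hsub measurableSet_closedBall.nullMeasurableSet
              measure_closedBall_lt_top.ne, fgt_vol_cball _ hR, fgt_vol_cball _ (half_pos hR),
              ← ENNReal.ofReal_sub _ (by positivity), ← ENNReal.ofReal_mul (by positivity)]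
            apply ENNReal.ofReal_le_ofReal
            have h3 : (1 / 2 : ℝ) ^ n ≤ 1 / 2 := pow_le_of_le_one (by norm_num) (by norm_num) hn.ne'
            have e : ((2 * R) ^ n)⁻¹ * (fgtω n * R ^ n - fgtω n * (R / 2) ^ n) =
                fgtω n / 2 ^ n * (1 - (1 / 2) ^ n) := by
              rw [mul_pow, div_pow, div_pow]
              field_simp
              simp
            rw [e, pow_succ, ← div_div, div_eq_mul_one_div (fgtω n / 2 ^ n) 2]
            gcongr
            linarith
        _ ≤ _ := by
            refine setLIntegral_mono' (measurableSet_closedBall.diff measurableSet_closedBall)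
              fun p hp => ?_
            apply ENNReal.ofReal_le_ofReal
            have : ‖p‖ ≤ R := by simpa using hp.1
            apply inv_anti₀ (by positivity)
            gcongr
            linarith
    rw [← sdiff_union_of_subset hsub, lintegral_union measurableSet_closedBall disjoint_sdiff_left]
    calc _ = ENNReal.ofReal (fgtω n / 2 ^ (n + 1)) + ENNReal.ofReal (L * (fgtω n / 2 ^ (n + 1))) := by
          rw [← ENNReal.ofReal_add (by positivity) (by positivity)]
          congr 1; push_cast; ring
      _ ≤ _ := add_le_add h2 h1

lemma fgt_closure (Y : En n × ℝ) {r : ℝ} (hr : 0 < r) :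
    closure (pcyl Y r) = closedBall Y.1 r ×ˢ Icc (Y.2 - r ^ 2) Y.2 := by
  rw [pcyl, box, closure_prod_eq, closure_ball _ hr.ne', closure_Ioo]
  have : 0 < r ^ 2 := by positivity
  linarith

lemma fgt_annulus (y : En n) (f : En n → ℝ≥0∞) {r S : ℝ} (hr : 0 < r)
    (hf : ∫⁻ x, f x ≤ ENNReal.ofReal S) {K : ℕ} (hK : 0 < K) :
    ∃ R, r / 2 + r / (4 * K) ≤ R ∧ R ≤ r - r / (4 * K) ∧ ∀ x₀, dist x₀ y = R →
      ∫⁻ x in ball x₀ (r / (4 * K)), f x ≤ ENNReal.ofReal (S / K) := by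
  have hK' : (0 : ℝ) < K := by exact_mod_cast hK
  set δ := r / (4 * K) with hδ
  have hδ0 : 0 < δ := by positivity
  have hδK : 4 * K * δ = r := by rw [hδ]; field_simp
  let An : ℕ → Set (En n) := fun j => {x | dist x y ∈ Ioc (r / 2 + 2 * δ * j) (r / 2 + 2 * δ * (j + 1))}
  have hAm : ∀ j, MeasurableSet (An j) := fun j =>
    (measurable_id.dist measurable_const) measurableSet_Ioc
  have hdisj : ∀ i j, i < j → Disjoint (An i) (An j) := fun i j hij => by
    rw [Set.disjoint_left]
    intro x h1 h2
    have h3 := h1.2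
    have h4 := h2.1
    have : (i : ℝ) + 1 ≤ j := by exact_mod_cast hij
    nlinarith
  have hsum : ∑ j ∈ Finset.range K, ∫⁻ x in An j, f x ≤ ENNReal.ofReal S := by
    rw [← lintegral_biUnion_finset _ (fun j _ => hAm j)]
    · exact (setLIntegral_le_lintegral _ _).trans hf
    · intro i _ j _ hij
      rcases lt_or_gt_of_ne hij with h | h
      · exact hdisj i j h
      · exact (hdisj j i h).symm
  obtain ⟨j, hj, hmin⟩ := Finset.exists_min_image (Finset.range K) (fun j => ∫⁻ x in An j, f x)
    ⟨0, by simpa using hK⟩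
  have hjK : (j : ℝ) + 1 ≤ K := by exact_mod_cast Finset.mem_range.1 hj
  have hle : ∫⁻ x in An j, f x ≤ ENNReal.ofReal (S / K) := by
    have h1 := (Finset.card_nsmul_le_sum _ _ _ hmin).trans hsum
    rw [Finset.card_range, nsmul_eq_mul] at h1
    rw [ENNReal.ofReal_div_of_pos hK', ENNReal.ofReal_natCast]
    rw [ENNReal.le_div_iff_mul_le (by left; exact_mod_cast hK.ne') (by simp), mul_comm]
    exact h1
  have hj0 : (0 : ℝ) ≤ j := by positivity
  refine ⟨r / 2 + 2 * δ * j + δ, by nlinarith, by nlinarith, fun x₀ hx₀ => ?_⟩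
  refine le_trans (lintegral_mono_set fun x hx => ?_) hle
  have h1 : dist x x₀ < δ := hx
  have h2 := dist_triangle x x₀ y
  have h3 := dist_triangle x₀ x y
  rw [dist_comm x₀ x] at h3
  show _ < _ ∧ _ ≤ _
  constructor <;> linarith

lemma fgt_step1 {u : En n × ℝ → ℝ} {a : En n × ℝ → Matrix (Fin n) (Fin n) ℝ}
    {b : En n × ℝ → En n} {Q : Set (En n × ℝ)} {ν δ T M θ τ σ : ℝ} {x₀ : En n} {β : En n → ℝ≥0∞}
    (hν : 1 ≤ ν) (hδ : 0 < δ) (hM : 0 < M) (hθ : 0 < θ)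
    (hu : IsC21 u Q) (hQ : closedBall x₀ δ ×ˢ Icc (T - δ ^ 2) T ⊆ Q)
    (ha : UnifParabolic ν a (box x₀ δ (T - δ ^ 2) T))
    (hpde : ∀ X ∈ box x₀ δ (T - δ ^ 2) T, 0 ≤ -Dt u X + Lop a b u X)
    (hMu : ∀ X ∈ Q, u X ≤ M) (hθu : θ * M ≤ u (x₀, T))
    (hβ : ∀ x ∈ ball x₀ δ, ∀ᵐ t ∂(volume.restrict (Ioo (T - δ ^ 2) T)),
      (‖b (x, t)‖₊ : ℝ≥0∞) ≤ β x)
    (hτ : volume {X | X ∈ box x₀ δ (T - δ ^ 2) T ∧ 0 < u X} ≤ ENNReal.ofReal τ)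
    (hσ : ∫⁻ x in ball x₀ δ, β x ^ n ≤ ENNReal.ofReal σ) (hτ0 : 0 ≤ τ) (hσ0 : 0 ≤ σ) :
    θ / 2 * (fgtω n * (θ / (θ + 8)) ^ n) ≤
      2 * (1 + 2 * (n * ν)) / δ ^ 2 * (ν * (1 + 2 * (n * ν)) / δ) ^ n * τ + (2 * ν) ^ n * σ := by
  have hδ2 : 0 < δ ^ 2 := by positivity
  have hν0 : 0 < ν := by linarith
  have hA : 0 < M / δ ^ 2 := by positivity
  have hAδ : M / δ ^ 2 * δ ^ 2 = M := by field_simp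
  have hφ0 : ∀ X : En n × ℝ, X.2 ≤ T →
      0 ≤ fgtφ (M / δ ^ 2) (M / δ ^ 2) (M / δ ^ 2 * T) x₀ X := fun X hX => by
    unfold fgtφ
    have h1 : 0 ≤ M / δ ^ 2 * ‖X.1 - x₀‖ ^ 2 := by positivity
    have h2 := mul_le_mul_of_nonneg_left hX hA.le
    linarith
  have key := fgt_abp_real (A := M / δ ^ 2) (c := M / δ ^ 2) (d := M / δ ^ 2 * T)
    (N := M / δ ^ 2 * (1 + 2 * (n * ν))) (k := 2 * M / δ) (m := θ * M) (V := M) (x₀ := x₀)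
    (I := fgtω n * (θ * M / (4 * δ)) ^ n * ((θ * M / (4 * δ) + 2 * M / δ) ^ n)⁻¹)
    (τ := τ) (σ := σ)
    hν hδ (by linarith) hu hQ ha hpde hA.le (by apply le_of_eq; ring) (by positivity)
    (by apply le_of_eq; field_simp) ?_ ?_ (mem_closedBall_self hδ.le) ?_ ?_ hβ
    (fgt_int_simple (by positivity) (by positivity)) ?_ hσ (by positivity) hτ0 hσ0 hM.le
    (by positivity)
  · have e1 : fgtω n * (θ * M / (4 * δ)) ^ n * ((θ * M / (4 * δ) + 2 * M / δ) ^ n)⁻¹ =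
        fgtω n * (θ / (θ + 8)) ^ n := by
      rw [mul_assoc, ← div_eq_mul_inv, ← div_pow]
      congr 2
      field_simp
      ring
    have e2 : 2 * ν * (M / δ ^ 2 * (1 + 2 * (n * ν))) / (2 * M / δ) = ν * (1 + 2 * (n * ν)) / δ := by
      field_simp
    rw [e1, e2] at key
    refine le_of_mul_le_mul_left (le_of_eq_of_le ?_ (key.trans_eq ?_)) hM <;> ring
  · intro x hx t ht
    have h1 := hMu (x, t) (hQ ⟨sphere_subset_closedBall hx, ht⟩)
    have h2 : ‖x - x₀‖ = δ := mem_sphere_iff_norm.1 hx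
    unfold fgtφ
    simp only [h2]
    have := mul_le_mul_of_nonneg_left ht.2 hA.le
    linarith
  · intro x hx
    have h1 := hMu (x, T - δ ^ 2) (hQ ⟨hx, ⟨le_rfl, by linarith⟩⟩)
    unfold fgtφ
    have h2 : 0 ≤ M / δ ^ 2 * ‖x - x₀‖ ^ 2 := by positivity
    have h3 : M / δ ^ 2 * (T - δ ^ 2) = M / δ ^ 2 * T - M := by rw [mul_sub, hAδ]
    simp only [h3]
    linarith
  · unfold fgtφ; simp; linarith
  · intro X hX
    have h1 := hMu X (hQ ⟨ball_subset_closedBall hX.1, Ioo_subset_Icc_self hX.2⟩)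
    have h2 := hφ0 X hX.2.2.le
    linarith
  · refine le_trans (measure_mono ?_) hτ
    rintro X ⟨h1, h3⟩
    refine ⟨h1, ?_⟩
    have h2 := hφ0 X h1.2.2.le
    linarith

lemma fgt_step2 (hn : 0 < n) {u : En n × ℝ → ℝ} {a : En n × ℝ → Matrix (Fin n) (Fin n) ℝ}
    {b : En n × ℝ → En n} {Q : Set (En n × ℝ)} {ν r R t₀ T M θ τ σ : ℝ} {y x₀ : En n}
    {β : En n → ℝ≥0∞} (L : ℕ)
    (hν : 1 ≤ ν) (hr : 0 < r) (hR : 0 < R) (hRr : R ≤ r) (hT : r ^ 2 / 4 ≤ T - t₀)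
    (hM : 0 < M) (hθ : 0 < θ)
    (hu : IsC21 u Q) (hQ : closedBall y R ×ˢ Icc t₀ T ⊆ Q)
    (ha : UnifParabolic ν a (box y R t₀ T))
    (hpde : ∀ X ∈ box y R t₀ T, 0 ≤ -Dt u X + Lop a b u X)
    (hMu : ∀ X ∈ Q, u X ≤ M) (hx₀ : x₀ ∈ closedBall y R) (hθu : 2 * θ * M ≤ u (x₀, T))
    (hlat : ∀ x ∈ sphere y R, ∀ t ∈ Icc t₀ T, u (x, t) ≤ θ * M)
    (hβ : ∀ x ∈ ball y R, ∀ᵐ t ∂(volume.restrict (Ioo t₀ T)),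
      (‖b (x, t)‖₊ : ℝ≥0∞) ≤ β x)
    (hτ : volume {X | X ∈ box y R t₀ T ∧ 0 < u X} ≤ ENNReal.ofReal τ)
    (hσ : ∫⁻ x in ball y R, β x ^ n ≤ ENNReal.ofReal σ) (hτ0 : 0 ≤ τ) (hσ0 : 0 ≤ σ) :
    θ / 2 * (L * (fgtω n / 2 ^ (n + 1))) ≤
      8 / r ^ 2 * (32 * ν * 2 ^ L / (θ * r)) ^ n * τ + (2 * ν) ^ n * σ := by
  have hr2 : 0 < r ^ 2 := by positivity
  have hν0 : 0 < ν := by linarith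
  have hTt : 0 < T - t₀ := by linarith
  set c := M / (T - t₀) with hc
  have hc0 : 0 < c := by positivity
  have hcT : c * (T - t₀) = M := by rw [hc]; field_simp
  have hcN : c ≤ 4 * M / r ^ 2 := by
    rw [hc, div_le_div_iff₀ hTt hr2]
    nlinarith
  have hθM : 0 < θ * M := by positivity
  have hφ0 : ∀ X : En n × ℝ, X.2 ≤ T →
      θ * M ≤ fgtφ 0 c (θ * M + c * T) y X := fun X hX => by
    unfold fgtφ
    have h2 := mul_le_mul_of_nonneg_left hX hc0.le
    linarith
  have hrad : θ * M / (4 * r) ≤ θ * M / (4 * R) := by gcongr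
  have key := fgt_abp_real (A := 0) (c := c) (d := θ * M + c * T)
    (N := 4 * M / r ^ 2) (k := θ * M / (4 * r) / 2 ^ L) (m := θ * M) (V := M) (x₀ := x₀)
    (I := L * (fgtω n / 2 ^ (n + 1)))
    (τ := τ) (σ := σ)
    hν hR (by linarith) hu hQ ha hpde le_rfl (by simpa using hcN) (by positivity)
    (by rw [mul_zero, zero_mul]; positivity) ?_ ?_ hx₀ ?_ ?_ hβ
    ((fgt_int_log hn (by positivity) L _ (by positivity) le_rfl).trans
      (lintegral_mono_set (closedBall_subset_closedBall hrad))) ?_ hσ (by positivity) hτ0 hσ0 hM.le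
    (by positivity)
  · have e2 : 2 * ν * (4 * M / r ^ 2) / (θ * M / (4 * r) / 2 ^ L) = 32 * ν * 2 ^ L / (θ * r) := by
      field_simp
      ring
    rw [e2] at key
    refine le_of_mul_le_mul_left (le_of_eq_of_le ?_ (key.trans_eq ?_)) hM <;> ring
  · intro x hx t ht
    have h1 := hlat x hx t ht
    have h2 := hφ0 (x, t) ht.2
    linarith
  · intro x hx
    have h1 := hMu (x, t₀) (hQ ⟨hx, ⟨le_rfl, by linarith⟩⟩)
    unfold fgtφ
    simp only
    linarith
  · unfold fgtφ; simp only; linarith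
  · intro X hX
    have h1 := hMu X (hQ ⟨ball_subset_closedBall hX.1, Ioo_subset_Icc_self hX.2⟩)
    have h2 := hφ0 X hX.2.2.le
    linarith
  · refine le_trans (measure_mono ?_) hτ
    rintro X ⟨h1, h3⟩
    refine ⟨h1, ?_⟩
    have h2 := hφ0 X h1.2.2.le
    linarith

lemma fgt_small (C₁ C₂ E₁ E₂ : ℝ) (h1 : 0 < E₁) (h2 : 0 < E₂) (hC₁ : 0 ≤ C₁) (hC₂ : 0 ≤ C₂) :
    ∃ μ : ℝ, μ ∈ Set.Ioo (0 : ℝ) 1 ∧ C₁ * μ < E₁ ∧ C₂ * μ < E₂ := by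
  have key : ∀ C E : ℝ, 0 < E → 0 ≤ C → ∀ μ, μ ≤ E / (C + 1) → 0 < μ → C * μ < E := by
    intro C E hE hC μ hμ h0
    rw [le_div_iff₀ (by linarith)] at hμ
    nlinarith
  have p1 : 0 < E₁ / (C₁ + 1) := by positivity
  have p2 : 0 < E₂ / (C₂ + 1) := by positivity
  have hpos : 0 < min (1 / 2) (min (E₁ / (C₁ + 1)) (E₂ / (C₂ + 1))) :=
    lt_min (by norm_num) (lt_min p1 p2)
  refine ⟨min (1 / 2) (min (E₁ / (C₁ + 1)) (E₂ / (C₂ + 1))), ⟨hpos, ?_⟩, ?_, ?_⟩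
  · exact lt_of_le_of_lt (min_le_left _ _) (by norm_num)
  · exact key _ _ h1 hC₁ _ ((min_le_right _ _).trans (min_le_left _ _)) hpos
  · exact key _ _ h2 hC₂ _ ((min_le_right _ _).trans (min_le_right _ _)) hpos

/-- **First Growth Theorem** (Theorem 3.5). -/
theorem first_growth_theorem
    (n : ℕ) (hn : 0 < n) (ν S : ℝ) (hν : 1 ≤ ν)
    (β₁ : ℝ) (hβ₁ : β₁ ∈ Set.Ioo (0 : ℝ) 1) :
    ∃ μ : ℝ, μ ∈ Set.Ioo (0 : ℝ) 1 ∧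
      ∀ (Y : En n × ℝ) (r : ℝ) (u : En n × ℝ → ℝ)
        (a : En n × ℝ → Matrix (Fin n) (Fin n) ℝ) (b : En n × ℝ → En n),
        0 < r →
        IsC21 u (closure (pcyl Y r)) →
        UnifParabolic ν a (pcyl Y r) →
        LxnLtinfPow b (pcyl Y r) ≤ ENNReal.ofReal S →
        (∀ X ∈ pcyl Y r, 0 ≤ -Dt u X + Lop a b u X) →
        volume {X ∈ pcyl Y r | 0 < u X} ≤ ENNReal.ofReal μ * volume (pcyl Y r) →
        supPos u (closure (pcyl Y (r / 2))) ≤ β₁ * supPos u (closure (pcyl Y r)) := by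
  have hω : 0 < fgtω n := fgtω_pos
  have hν0 : 0 < ν := by linarith
  set S' := max S 0 with hS'
  have hS0 : 0 ≤ S' := le_max_right _ _
  set θ := β₁ / 2 with hθd
  have hθ : 0 < θ := half_pos hβ₁.1
  set E₁ := θ / 2 * (fgtω n * (θ / (θ + 8)) ^ n) with hE₁
  have hE₁0 : 0 < E₁ := by positivity
  obtain ⟨K, hK⟩ := exists_nat_gt (2 * ((2 * ν) ^ n * S') / E₁)
  have hK0 : (0 : ℝ) < K := lt_of_le_of_lt (by positivity) hK
  have hKn : 0 < K := by exact_mod_cast hK0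
  have hK1 : (2 * ν) ^ n * (S' / K) < E₁ / 2 := by
    rw [div_lt_iff₀ hE₁0] at hK
    rw [← mul_div_assoc, div_lt_iff₀ hK0]
    linarith
  set κ := θ / 2 * (fgtω n / 2 ^ (n + 1)) with hκ
  have hκ0 : 0 < κ := by positivity
  obtain ⟨L, hL⟩ := exists_nat_gt ((2 * ν) ^ n * S' / κ)
  have hL1 : 0 < θ / 2 * (L * (fgtω n / 2 ^ (n + 1))) - (2 * ν) ^ n * S' := by
    rw [div_lt_iff₀ hκ0, hκ] at hL
    linarith
  obtain ⟨μ, hμ, hμ1, hμ2⟩ := fgt_small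
    (2 * (1 + 2 * (n * ν)) * (ν * (1 + 2 * (n * ν))) ^ n * (4 * K) ^ (n + 2) * fgtω n)
    (8 * (32 * ν * 2 ^ L / θ) ^ n * fgtω n) (E₁ / 2)
    (θ / 2 * (L * (fgtω n / 2 ^ (n + 1))) - (2 * ν) ^ n * S')
    (by positivity) hL1 (by positivity) (by positivity)
  refine ⟨μ, hμ, ?_⟩
  intro Y r u a b hr hu ha hb hpde hvol
  obtain ⟨y, s⟩ := Y
  have hcl := fgt_closure (y, s) hr
  have hcl2 := fgt_closure (y, s) (half_pos hr)
  simp only at hcl hcl2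
  set M := supPos u (closure (pcyl (y, s) r)) with hMdef
  have hr2 : 0 < r ^ 2 := by positivity
  -- bounds by the supremum
  have hbdd : BddAbove ((fun X => max (u X) 0) '' closure (pcyl (y, s) r)) := by
    have hc : IsCompact (closure (pcyl (y, s) r)) := by
      rw [hcl]; exact (isCompact_closedBall _ _).prod isCompact_Icc
    exact (hc.image_of_continuousOn (hu.cont.sup continuousOn_const)).bddAbove
  have hMu' : ∀ X ∈ closure (pcyl (y, s) r), max (u X) 0 ≤ M := fun X hX =>
    le_csSup hbdd ⟨X, hX, rfl⟩
  have hMu : ∀ X ∈ closure (pcyl (y, s) r), u X ≤ M := fun X hX =>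
    (le_max_left _ _).trans (hMu' X hX)
  have hM0 : 0 ≤ M := (le_max_right _ _).trans (hMu' (y, s) (by
    rw [hcl]; exact ⟨mem_closedBall_self hr.le, ⟨by linarith, le_rfl⟩⟩))
  have hne : ((fun X => max (u X) 0) '' closure (pcyl (y, s) (r / 2))).Nonempty := by
    refine ⟨_, (y, s), ?_, rfl⟩
    rw [hcl2]; exact ⟨mem_closedBall_self (by positivity), ⟨by nlinarith, le_rfl⟩⟩
  refine csSup_le hne ?_
  rintro _ ⟨⟨x₀, T⟩, hX, rfl⟩
  refine max_le ?_ (mul_nonneg hβ₁.1.le hM0)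
  rw [hcl2] at hX
  obtain ⟨hx₀, hT⟩ := hX
  simp only at hx₀ hT
  have hT1 : s - r ^ 2 / 4 ≤ T := by have := hT.1; nlinarith
  have hT2 : T ≤ s := hT.2
  have hx₀' : dist x₀ y ≤ r / 2 := hx₀
  rcases hM0.eq_or_lt with hM | hM
  · have := hMu (x₀, T) (by
      rw [hcl]; exact ⟨closedBall_subset_closedBall (by linarith) hx₀, ⟨by linarith, hT2⟩⟩)
    rw [← hM] at this ⊢
    simpa using this
  -- the drift bound
  set β : En n → ℝ≥0∞ := fun x => essSup (fun t => (‖b (x, t)‖₊ : ℝ≥0∞))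
    (volume.restrict {t | (x, t) ∈ pcyl (y, s) r}) with hβd
  have hbS : ∫⁻ x, β x ^ n ≤ ENNReal.ofReal S' :=
    le_trans hb (ENNReal.ofReal_le_ofReal (le_max_left _ _))
  have hβ : ∀ (z : En n) (ρ t₀ t₁ : ℝ), box z ρ t₀ t₁ ⊆ pcyl (y, s) r → ∀ x ∈ ball z ρ,
      ∀ᵐ t ∂(volume.restrict (Ioo t₀ t₁)), (‖b (x, t)‖₊ : ℝ≥0∞) ≤ β x := by
    intro z ρ t₀ t₁ hsub x hx
    have h1 : ∀ᵐ t ∂(volume.restrict {t | (x, t) ∈ pcyl (y, s) r}),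
        (‖b (x, t)‖₊ : ℝ≥0∞) ≤ β x := ENNReal.ae_le_essSup _
    have h2 : Ioo t₀ t₁ ⊆ {t | (x, t) ∈ pcyl (y, s) r} := fun t ht => hsub ⟨hx, ht⟩
    exact ae_mono (Measure.restrict_mono h2 le_rfl) h1
  set τ := μ * (fgtω n * r ^ n * r ^ 2) with hτd
  have hτ0 : 0 ≤ τ := by have := hμ.1; positivity
  have hτ : ∀ (z : En n) (ρ t₀ t₁ : ℝ), box z ρ t₀ t₁ ⊆ pcyl (y, s) r →
      volume {X | X ∈ box z ρ t₀ t₁ ∧ 0 < u X} ≤ ENNReal.ofReal τ := by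
    intro z ρ t₀ t₁ hsub
    rw [hτd, ENNReal.ofReal_mul hμ.1.le, ← fgt_vol_pcyl (y, s) hr]
    refine le_trans (measure_mono ?_) hvol
    rintro X ⟨h1, h2⟩
    exact ⟨hsub h1, h2⟩
  obtain ⟨R, hR1, hR2, hRint⟩ := fgt_annulus y (fun x => β x ^ n) hr hbS hKn
  set δ := r / (4 * K) with hδ
  have hδ0 : 0 < δ := by positivity
  have hδr : δ ≤ r / 4 := by
    have : (1 : ℝ) ≤ K := by exact_mod_cast hKn
    rw [hδ]; gcongr; linarith
  have hδ2 : δ ^ 2 ≤ r ^ 2 / 16 := by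
    have := pow_le_pow_left₀ hδ0.le hδr 2
    linarith [this, (by ring : (r / 4) ^ 2 = r ^ 2 / 16)]
  -- Step 1
  have step1 : ∀ z ∈ sphere y R, ∀ t ∈ Icc (s - r ^ 2 / 2) T, u (z, t) ≤ θ * M := by
    intro z hz t ht
    by_contra hcon
    push Not at hcon
    have hzy : dist z y = R := hz
    have hb1 : ∀ x, dist x z ≤ δ → dist x y ≤ r := fun x hx => by
      have := dist_triangle x z y
      linarith
    have hb2 : ball z δ ⊆ ball y r := fun x hx => by
      have := dist_triangle x z y
      have h1 : dist x z < δ := hx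
      show dist x y < r
      linarith
    have hsub : box z δ (t - δ ^ 2) t ⊆ pcyl (y, s) r := fun X hX =>
      ⟨hb2 hX.1, ⟨by have := hX.2.1; have := ht.1; simp only; linarith,
        by have := hX.2.2; have := ht.2; simp only; linarith⟩⟩
    have h := fgt_step1 (θ := θ) (M := M) (τ := τ) (σ := S' / K) (β := β) hν hδ0 hM hθ hu
      (Q := closure (pcyl (y, s) r)) (x₀ := z) (T := t) (a := a) (b := b)
      (by
        rw [hcl]
        rintro ⟨x, t'⟩ ⟨h1, h2⟩
        exact ⟨hb1 x h1, ⟨by have := h2.1; have := ht.1; simp only at *; linarith,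
          by have := h2.2; have := ht.2; simp only at *; linarith⟩⟩)
      (fun X hX => ha X (hsub hX)) (fun X hX => hpde X (hsub hX)) hMu hcon.le
      (hβ _ _ _ _ hsub) (hτ _ _ _ _ hsub) (hRint z hzy) hτ0 (by positivity)
    have e : 2 * (1 + 2 * (n * ν)) / δ ^ 2 * (ν * (1 + 2 * (n * ν)) / δ) ^ n * τ =
        2 * (1 + 2 * (n * ν)) * (ν * (1 + 2 * (n * ν))) ^ n * (4 * K) ^ (n + 2) * fgtω n * μ := by
      rw [hτd, hδ, div_pow _ (r / (4 * K)) n, div_pow r, div_pow r, pow_add]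
      field_simp
    rw [e] at h
    linarith
  -- Step 2
  by_contra hcon
  push Not at hcon
  have hRr : R ≤ r := by linarith
  have hR0 : 0 < R := by linarith
  have hsub : box y R (s - r ^ 2 / 2) T ⊆ pcyl (y, s) r := fun X hX =>
    ⟨ball_subset_ball hRr hX.1, ⟨by have := hX.2.1; simp only; linarith,
      by have := hX.2.2; simp only; linarith⟩⟩
  have h := fgt_step2 hn (θ := θ) (M := M) (τ := τ) (σ := S') (β := β) L hν hr hR0 hRr
    (t₀ := s - r ^ 2 / 2) (T := T) (by linarith) hM hθ hu
    (Q := closure (pcyl (y, s) r)) (y := y) (x₀ := x₀) (a := a) (b := b)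
    (by
      rw [hcl]
      rintro ⟨x, t'⟩ ⟨h1, h2⟩
      exact ⟨closedBall_subset_closedBall hRr h1, ⟨by have := h2.1; simp only at *; linarith,
        by have := h2.2; simp only at *; linarith⟩⟩)
    (fun X hX => ha X (hsub hX)) (fun X hX => hpde X (hsub hX)) hMu
    (by show dist x₀ y ≤ R; linarith) (by rw [hθd]; linarith) step1
    (hβ _ _ _ _ hsub) (hτ _ _ _ _ hsub) ((setLIntegral_le_lintegral _ _).trans hbS) hτ0 hS0
  have e : 8 / r ^ 2 * (32 * ν * 2 ^ L / (θ * r)) ^ n * τ =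
      8 * (32 * ν * 2 ^ L / θ) ^ n * fgtω n * μ := by
    rw [hτd, ← div_div, div_pow _ r n]
    field_simp
  rw [e] at h
  linarith
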